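/- arXiv:1808.04805 — 4 statements merged into one kernel-verified Lean document; each statement's English description precedes it below -/
import Mathlib

section
/- Let p be a prime, k a field of characteristic p, and m, n, N₁, N₂, B natural numbers. Consider the system of N₁ homogeneous equations ∑_{j=1}^{N₂} f_{ij}·Y_j^(p^m) = 0 (for i = 1,…,N₁), where the f_{ij} are polynomials in k[x_1,…,x_n] of total degree at most B. Then every solution y = (y_1,…,y_{N₂}) ∈ (k[x_1,…,x_n])^{N₂} of the system lies in the k[x_1,…,x_n]-submodule of (k[x_1,…,x_n])^{N₂} spanned by those solutions whose entries all have total degree at most (2·N₁²·N₂·C(B+n, n)·p^(m(n−1))·B)^(2^n), where C(B+n, n) is the binomial coefficient. -/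
/-!
Put `q = p ^ m`. The idea is to turn the Frobenius system into a *linear* system over `k[x]` with the
same solutions, and to bound the generators of the latter by Hermann's elimination argument.

**Linearization.** For an additive `π : k → k` with `π (b ^ q * a) = b * π a` and an exponent `α`
with all entries `< q`, the operator `cartier` sends `∑ c_u x^u` to `∑ π (c_{α + qβ}) x^β`. It
satisfies `cartier (a ^ q * g) = a * cartier g` (`cartier_mul`) and does not raise degrees. As `k` is
a vector space over its subfield of `q`-th powers, these operators jointly separate points, so
`∑ f_j y_j ^ q = 0` iff `∑ cartier f_j * y_j = 0` for all of them (`frobenius_iff_linear`). The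
linear system so obtained may be infinite, but a nonvanishing minor of maximal size singles out at
most `N₂` rows with the same solutions (`exists_minor`).

**Linear systems.** For `R` equations of degree at most `d` in `n` variables the solutions are
generated in degree at most `(2Rd)^(2^n)` (`hermann`). Over an infinite field this is an induction on
`n` (`hermann_infinite`): after a linear change of coordinates a maximal nonzero minor `Δ` is monic,
up to a unit, in one variable `X`; modulo the solutions given by Cramer's rule every solution can be
reduced to have `X`-degree less than `Rd`; comparing coefficients of powers of `X` then leaves a
system of at most `R (R + 1) d` equations in one variable fewer. The induction closes because it
carries the sharper bound `(2Rd)^(2^n) - Rd`. An arbitrary field is embedded in its algebraic closure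
`K`, and generators are carried back by applying `k`-linear functionals `K → k` to coefficients, which
is again `cartier`, with `q = 1` and `α = 0`.

Finally `2 N₂ B` is at most the base of the required bound as soon as `N₁ ≠ 0`.
-/

namespace FrobHermann

open MvPolynomial

/-! ### Minors of a matrix over a domain -/

lemma totalDegree_det_le {σ k : Type*} [Field k] {r d : ℕ}
    (M : Matrix (Fin r) (Fin r) (MvPolynomial σ k)) (hM : ∀ i j, (M i j).totalDegree ≤ d) :
    M.det.totalDegree ≤ r * d := by
  rw [Matrix.det_apply]
  refine totalDegree_finsetSum_le fun g _ => ?_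
  rw [Units.smul_def, zsmul_eq_mul]
  refine (totalDegree_mul _ _).trans ?_
  have h1 : ((((Equiv.Perm.sign g : ℤˣ) : ℤ) : MvPolynomial σ k)).totalDegree = 0 := by
    rw [← map_intCast (C : k →+* MvPolynomial σ k), totalDegree_C]
  rw [h1, zero_add]
  refine (totalDegree_finsetProd _ _).trans ?_
  refine (Finset.sum_le_sum fun i _ => hM _ _).trans ?_
  simp

/-- A nonvanishing minor of maximal size. By maximality the bordered minors vanish, so `Δ` times any
row is a combination of the selected rows, and the selected rows have the same solutions as all rows.
The index type `ι` of the rows may be infinite. -/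
lemma exists_minor {ι τ S : Type*} [Fintype τ] [CommRing S] [IsDomain S] (A : ι → τ → S) :
    ∃ (r : ℕ) (s : Fin r → ι) (c : Fin r → τ), Function.Injective s ∧ Function.Injective c ∧
      (Matrix.of fun a b => A (s a) (c b)).det ≠ 0 ∧
      ∀ y : τ → S, (∀ a, ∑ j, A (s a) j * y j = 0) → ∀ i, ∑ j, A i j * y j = 0 := by
  classical
  let P : ℕ → Prop := fun r => ∃ (s : Fin r → ι) (c : Fin r → τ),
    (Matrix.of fun a b => A (s a) (c b)).det ≠ 0
  have hc : ∀ r (s : Fin r → ι) (c : Fin r → τ),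
      (Matrix.of fun a b => A (s a) (c b)).det ≠ 0 → Function.Injective c := by
    intro r s c h a b hab
    by_contra hne
    exact h (Matrix.det_zero_of_column_eq hne (by intro i; simp [hab]))
  have hs : ∀ r (s : Fin r → ι) (c : Fin r → τ),
      (Matrix.of fun a b => A (s a) (c b)).det ≠ 0 → Function.Injective s := by
    intro r s c h a b hab
    by_contra hne
    exact h (Matrix.det_zero_of_row_eq hne (by ext i; simp [hab]))
  have hP0 : P 0 := ⟨Fin.elim0, Fin.elim0, by simp⟩
  have hPb : ∀ r, P r → r ≤ Fintype.card τ := by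
    rintro r ⟨s, c, h⟩
    simpa using Fintype.card_le_of_injective c (hc r s c h)
  set r := Nat.findGreatest P (Fintype.card τ) with hr
  obtain ⟨s, c, h⟩ : P r := Nat.findGreatest_spec (Nat.zero_le _) hP0
  have hmax : ¬ P (r + 1) := fun h' => by
    have := Nat.le_findGreatest (hPb _ h') h'
    omega
  refine ⟨r, s, c, hs r s c h, hc r s c h, h, fun y hy i => ?_⟩
  -- Cofactors along the first column of the bordered minor; they do not depend on that column
  let w : Fin r → S := fun a => (-1) ^ ((a.succ : Fin (r + 1)) : ℕ) *
    (Matrix.of fun x z => A ((Fin.cons i s : Fin (r + 1) → ι) (a.succ.succAbove x)) (c z)).det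
  have key : ∀ j, (Matrix.of fun a b => A (s a) (c b)).det * A i j
      = - ∑ a, w a * A (s a) j := by
    intro j
    have h0 : (Matrix.of fun a b => A ((Fin.cons i s : Fin (r + 1) → ι) a)
        ((Fin.cons j c : Fin (r + 1) → τ) b)).det = 0 := by
      by_contra hne
      exact hmax ⟨_, _, hne⟩
    rw [Matrix.det_succ_column_zero, Fin.sum_univ_succ] at h0
    rw [eq_neg_iff_add_eq_zero, ← h0]
    congr 1
    · simp only [Fin.val_zero, pow_zero, one_mul, Matrix.of_apply, Fin.cons_zero]
      rw [mul_comm]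
      congr 1
    · refine Finset.sum_congr rfl fun a _ => ?_
      simp only [Matrix.of_apply, Fin.cons_zero, Fin.cons_succ, w]
      rw [mul_right_comm]
      congr 1
  have : (Matrix.of fun a b => A (s a) (c b)).det * ∑ j, A i j * y j = 0 := by
    rw [Finset.mul_sum]
    simp only [← mul_assoc, key, neg_mul, Finset.sum_neg_distrib, Finset.sum_mul]
    rw [Finset.sum_comm]
    simp [mul_assoc, ← Finset.mul_sum, hy]
  exact (mul_eq_zero.mp this).resolve_left h

/-! ### Linear changes of coordinates -/

lemma totalDegree_aeval_le_of_linear {σ τ k : Type*} [Field k] (g : σ → MvPolynomial τ k)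
    (hg : ∀ i, (g i).totalDegree ≤ 1) (f : MvPolynomial σ k) :
    (aeval g f).totalDegree ≤ f.totalDegree := by
  rw [aeval_def, eval₂_eq]
  refine totalDegree_finsetSum_le fun d hd => ?_
  refine (totalDegree_mul _ _).trans ?_
  rw [algebraMap_eq, totalDegree_C, zero_add]
  refine (totalDegree_finsetProd _ _).trans ?_
  refine le_trans ?_ (le_totalDegree hd)
  refine Finset.sum_le_sum fun i _ => (totalDegree_pow _ _).trans ?_
  simpa using Nat.mul_le_mul_left (d i) (hg i)

/-- The top formal coefficient of a product is the product of the top formal coefficients. -/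
lemma coeff_prod_sum {ι S : Type*} [CommRing S] (s : Finset ι) (P : ι → Polynomial S) (d : ι → ℕ)
    (h : ∀ i, (P i).natDegree ≤ d i) :
    (∏ i ∈ s, P i).coeff (∑ i ∈ s, d i) = ∏ i ∈ s, (P i).coeff (d i) ∧
      (∏ i ∈ s, P i).natDegree ≤ ∑ i ∈ s, d i := by
  classical
  have hdeg : ∀ s : Finset ι, (∏ i ∈ s, P i).natDegree ≤ ∑ i ∈ s, d i := fun s =>
    (Polynomial.natDegree_prod_le _ _).trans (Finset.sum_le_sum fun i _ => h i)
  refine ⟨?_, hdeg s⟩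
  induction s using Finset.induction_on with
  | empty => simp
  | insert a s ha ih =>
    rw [Finset.prod_insert ha, Finset.sum_insert ha, Finset.prod_insert ha,
      Polynomial.coeff_mul_add_eq_of_natDegree_le (h a) (hdeg s), ih]

/-- The linear substitution `x₀ ↦ x₀`, `xᵢ₊₁ ↦ xᵢ₊₁ + cᵢ x₀`. -/
noncomputable def shear {k : Type*} [Field k] {n : ℕ} (c : Fin n → k) :
    MvPolynomial (Fin (n + 1)) k →ₐ[k] MvPolynomial (Fin (n + 1)) k :=
  aeval (Fin.cons (X 0) fun i => X i.succ + C (c i) * X 0)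

lemma shear_comp_neg {k : Type*} [Field k] {n : ℕ} (c : Fin n → k) :
    (shear c).comp (shear (-c)) = AlgHom.id k _ := by
  refine algHom_ext fun i => ?_
  refine Fin.cases ?_ (fun i => ?_) i
  · simp [shear]
  · simp [shear, algHom_C]

/-- The substitution `shear c` as an automorphism, with inverse `shear (-c)`. -/
noncomputable def shearEquiv {k : Type*} [Field k] {n : ℕ} (c : Fin n → k) :
    MvPolynomial (Fin (n + 1)) k ≃ₐ[k] MvPolynomial (Fin (n + 1)) k :=
  AlgEquiv.ofAlgHom (shear c) (shear (-c)) (shear_comp_neg c)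
    (by simpa using shear_comp_neg (-c))

lemma totalDegree_shear_le {k : Type*} [Field k] {n : ℕ} (c : Fin n → k)
    (f : MvPolynomial (Fin (n + 1)) k) : (shear c f).totalDegree ≤ f.totalDegree := by
  refine totalDegree_aeval_le_of_linear _ (fun i => ?_) f
  refine Fin.cases ?_ (fun i => ?_) i
  · simp
  · simp only [Fin.cons_succ]
    refine (totalDegree_add _ _).trans (max_le (by simp) ?_)
    refine (totalDegree_mul _ _).trans (by simp)

/-- Over an infinite field the top homogeneous part of `F ≠ 0` takes a nonzero value at some point
`(1, c)`. The displayed sum is that value. -/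
lemma exists_top_eval_ne_zero {k : Type*} [Field k] [Infinite k] {n : ℕ}
    (F : MvPolynomial (Fin (n + 1)) k) (hF : F ≠ 0) :
    ∃ c : Fin n → k, ∑ d ∈ F.support with d.degree = F.totalDegree,
      F.coeff d * ∏ i : Fin n, c i ^ d i.succ ≠ 0 := by
  classical
  set e := F.totalDegree with he
  set G := homogeneousComponent e F with hG
  have hGne : G ≠ 0 := by
    obtain ⟨d, hd, hde⟩ := Finset.exists_mem_eq_sup F.support (support_nonempty.mpr hF)
      (fun s => s.sum fun _ e => e)
    intro h0
    have h1 := coeff_homogeneousComponent e F d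
    rw [← hG, h0, coeff_zero, if_pos] at h1
    · exact (mem_support_iff.mp hd) h1.symm
    · rw [he]; exact hde.symm
  -- The factor `X 0` forces `b 0 ≠ 0`, so that `b` can be rescaled to have first coordinate `1`.
  have hex : ∃ b : Fin (n + 1) → k, eval b (G * X 0) ≠ 0 := by
    by_contra! hcon
    have : G * X 0 = 0 := MvPolynomial.funext fun b => by simpa using hcon b
    exact (mul_ne_zero hGne (X_ne_zero 0)) this
  obtain ⟨b, hb⟩ := hex
  rw [map_mul, eval_X] at hb
  have hb0 : b 0 ≠ 0 := right_ne_zero_of_mul hb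
  have hbG : eval b G ≠ 0 := left_ne_zero_of_mul hb
  refine ⟨fun i => b i.succ / b 0, fun hz => hbG ?_⟩
  have : eval b G = b 0 ^ e * ∑ d ∈ F.support with d.degree = e,
      F.coeff d * ∏ i : Fin n, (b i.succ / b 0) ^ d i.succ := by
    rw [hG, homogeneousComponent_apply, map_sum, Finset.mul_sum]
    refine Finset.sum_congr rfl fun d hd => ?_
    rw [Finset.mem_filter] at hd
    rw [eval_monomial, Finsupp.prod_fintype _ _ (by simp), Fin.prod_univ_succ, ← hd.2,
      Finsupp.degree_eq_sum, Fin.sum_univ_succ, pow_add, ← Finset.prod_pow_eq_pow_sum]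
    have : ∏ i : Fin n, b i.succ ^ d i.succ
        = (∏ i : Fin n, b 0 ^ d i.succ) * ∏ i : Fin n, (b i.succ / b 0) ^ d i.succ := by
      rw [← Finset.prod_mul_distrib]
      refine Finset.prod_congr rfl fun i _ => ?_
      rw [← mul_pow, mul_div_cancel₀ _ hb0]
    rw [this]; ring
  rw [this, hz, mul_zero]

/-- After `shear c`, the coefficient of `x₀ ^ deg F` in `F` is the value at `(1, c)` of the top
homogeneous part of `F`. -/
lemma coeff_shear_top {k : Type*} [Field k] {n : ℕ} (c : Fin n → k)
    (F : MvPolynomial (Fin (n + 1)) k) :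
    (finSuccEquiv k n (shear c F)).coeff F.totalDegree =
      C (∑ d ∈ F.support with d.degree = F.totalDegree,
        F.coeff d * ∏ i : Fin n, c i ^ d i.succ) := by
  classical
  let L : Fin (n + 1) → Polynomial (MvPolynomial (Fin n) k) :=
    Fin.cons Polynomial.X fun i => Polynomial.C (X i) + Polynomial.C (C (c i)) * Polynomial.X
  have hL : finSuccEquiv k n (shear c F) =
      ∑ d ∈ F.support, Polynomial.C (C (F.coeff d)) * ∏ i, L i ^ d i := by
    have : ((finSuccEquiv k n : _ →ₐ[k] _).comp (shear c)) = aeval L := by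
      refine algHom_ext fun i => ?_
      refine Fin.cases ?_ (fun i => ?_) i
      · simp [shear, L, finSuccEquiv_X_zero]
      · simp [shear, L, finSuccEquiv_apply]
    have h2 := congrArg (fun g => g F) this
    simp only [AlgHom.comp_apply] at h2
    refine h2.trans ?_
    rw [aeval_def, eval₂_eq']
    rfl
  have hL1 : ∀ i, (L i).natDegree ≤ 1 := by
    intro i
    refine Fin.cases ?_ (fun i => ?_) i
    · simp [L]
    · simp only [L, Fin.cons_succ]
      rw [add_comm]
      exact Polynomial.natDegree_linear_le
  have hLd : ∀ (d : Fin (n + 1) →₀ ℕ) i, (L i ^ d i).natDegree ≤ d i := fun d i =>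
    (Polynomial.natDegree_pow_le_of_le _ (hL1 i)).trans (by simp)
  have hLc : ∀ (d : Fin (n + 1) →₀ ℕ) i, (L i ^ d i).coeff (d i) = (L i).coeff 1 ^ d i :=
    fun d i => by simpa using Polynomial.coeff_pow_of_natDegree_le (m := d i) (hL1 i)
  rw [hL, Polynomial.finsetSum_coeff, map_sum, Finset.sum_filter]
  refine Finset.sum_congr rfl fun d hd => ?_
  obtain ⟨h1, h2⟩ := coeff_prod_sum Finset.univ (fun i => L i ^ d i) d (hLd d)
  rw [Polynomial.coeff_C_mul]
  rw [← Finsupp.degree_eq_sum] at h1 h2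
  split_ifs with hde
  · rw [← hde, h1, Fin.prod_univ_succ]
    simp only [hLc]
    simp [L]
  · rw [Polynomial.coeff_eq_zero_of_natDegree_lt, mul_zero]
    refine lt_of_le_of_lt h2 (lt_of_le_of_ne ?_ hde)
    exact le_totalDegree hd

lemma finSuccEquiv_rename_succ {k : Type*} [Field k] {n : ℕ} (a : MvPolynomial (Fin n) k) :
    finSuccEquiv k n (rename Fin.succ a) = Polynomial.C a := by
  induction a using MvPolynomial.induction_on with
  | C a => simp [finSuccEquiv_apply]
  | add p q hp hq => simp [hp, hq]
  | mul_X p i hp => rw [map_mul, map_mul, hp, rename_X, finSuccEquiv_X_succ, map_mul]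

/-- Coordinates adapted to `F ≠ 0`: an identification of `k[x₀,…,xₙ]` with `k[x₁,…,xₙ][X]` that is
compatible with total degrees in both directions and under which division with remainder by `F` is
possible, the leading coefficient of `F` in `X` being a unit. -/
lemma exists_coords {k : Type*} [Field k] [Infinite k] {n : ℕ}
    (F : MvPolynomial (Fin (n + 1)) k) (hF : F ≠ 0) :
    ∃ Θ : MvPolynomial (Fin (n + 1)) k ≃+* Polynomial (MvPolynomial (Fin n) k),
      (∀ f i, (Θ f).coeff i ≠ 0 → ((Θ f).coeff i).totalDegree + i ≤ f.totalDegree) ∧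
      (∀ a l, (Θ.symm (Polynomial.C a * Polynomial.X ^ l)).totalDegree ≤ a.totalDegree + l) ∧
      (∀ G, ∃ Q, (Θ (G - F * Q)).degree < (Θ F).degree) := by
  obtain ⟨c, hc⟩ := exists_top_eval_ne_zero F hF
  set u := ∑ d ∈ F.support with d.degree = F.totalDegree,
      F.coeff d * ∏ i : Fin n, c i ^ d i.succ with hu
  let Θ := ((shearEquiv c).trans (finSuccEquiv k n)).toRingEquiv
  have hΘ : ∀ f, Θ f = finSuccEquiv k n (shear c f) := fun f => rfl
  have h1 : ∀ f i, (Θ f).coeff i ≠ 0 → ((Θ f).coeff i).totalDegree + i ≤ f.totalDegree := by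
    intro f i hi
    exact (totalDegree_coeff_finSuccEquiv_add_le _ _ hi).trans (totalDegree_shear_le c f)
  refine ⟨Θ, h1, ?_, ?_⟩
  · intro a l
    have : Θ.symm (Polynomial.C a * Polynomial.X ^ l)
        = shear (-c) (rename Fin.succ a * X 0 ^ l) := by
      rw [RingEquiv.symm_apply_eq, hΘ]
      have h2 : ∀ f, shear c (shear (-c) f) = f := fun f =>
        congrArg (fun g => g f) (shear_comp_neg c)
      rw [h2, map_mul, map_pow, finSuccEquiv_X_zero, finSuccEquiv_rename_succ]
    rw [this]
    refine (totalDegree_shear_le _ _).trans ((totalDegree_mul _ _).trans ?_)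
    exact add_le_add (totalDegree_rename_le _ _) (by simp)
  · have htop : (Θ F).coeff F.totalDegree = C u := coeff_shear_top c F
    have hnd : (Θ F).natDegree ≤ F.totalDegree := by
      rw [Polynomial.natDegree_le_iff_coeff_eq_zero]
      intro N hN
      by_contra hne
      have := h1 F N hne
      omega
    let v : Polynomial (MvPolynomial (Fin n) k) := Polynomial.C (C u⁻¹)
    have hv : Polynomial.C (C u) * v = 1 := by
      simp [v, ← map_mul, mul_inv_cancel₀ hc]
    have hmon : (Θ F * v).Monic := by
      refine Polynomial.monic_of_natDegree_le_of_coeff_eq_one F.totalDegree ?_ ?_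
      · refine Polynomial.natDegree_mul_le.trans ?_
        simpa [v] using hnd
      · rw [Polynomial.coeff_mul_C, htop, ← map_mul, mul_inv_cancel₀ hc, map_one]
    intro G
    refine ⟨Θ.symm (v * (Θ G /ₘ (Θ F * v))), ?_⟩
    have h3 := Polynomial.modByMonic_add_div (Θ G) (Θ F * v)
    have h4 := Polynomial.degree_modByMonic_lt (Θ G) hmon
    have h5 : Θ (G - F * Θ.symm (v * (Θ G /ₘ (Θ F * v)))) = Θ G %ₘ (Θ F * v) := by
      rw [map_sub, map_mul, RingEquiv.apply_symm_apply]
      rw [← mul_assoc, sub_eq_iff_eq_add]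
      exact h3.symm
    rw [h5]
    refine h4.trans_le ?_
    rw [Polynomial.degree_mul]
    have : v.degree ≤ 0 := Polynomial.degree_C_le
    simpa using add_le_add_right this (Θ F).degree

/-! ### The rule of Cramer -/

/-- The solution of the system `A` obtained from Cramer's rule by giving the variable `j` the value
`Δ = det M`, and the value `0` to the other variables outside the columns `c` of the minor `M`.
It is meant for `j` outside these columns; otherwise the formula for `v` gives the zero solution. -/
lemma exists_cramer_solution {S τ : Type*} [CommRing S] [Fintype τ] [DecidableEq τ] {r : ℕ}
    (A : Fin r → τ → S) (c : Fin r → τ) (M : Matrix (Fin r) (Fin r) S)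
    (hM : M = Matrix.of fun a b => A a (c b)) (j : τ) :
    ∃ v : τ → S, (∀ a, ∑ t, A a t * v t = 0) ∧
      (∀ t, v t = (if t = j then M.det else 0) -
        ∑ a, if c a = t then (M.cramer fun a => A a j) a else 0) ∧
      (∀ t, t ∉ Set.range c → v t = if t = j then M.det else 0) := by
  let v : τ → S := fun t => (if t = j then M.det else 0) -
        ∑ a, if c a = t then (M.cramer fun a => A a j) a else 0
  refine ⟨v, fun a => ?_, fun t => rfl, fun t ht => ?_⟩
  · have h1 := congrFun (Matrix.mulVec_cramer M fun a => A a j) a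
    simp only [Matrix.mulVec, dotProduct, Pi.smul_apply, smul_eq_mul] at h1
    simp only [v, mul_sub, Finset.sum_sub_distrib, mul_ite, mul_zero, Finset.mul_sum]
    rw [Finset.sum_comm]
    simp only [Finset.sum_ite_eq, Finset.mem_univ, if_true, Finset.sum_ite_eq']
    rw [sub_eq_zero, mul_comm, ← h1, hM]
    rfl
  · simp only [v]
    rw [Finset.sum_eq_zero, sub_zero]
    intro a _
    rw [if_neg]
    rintro rfl
    exact ht ⟨a, rfl⟩

/-- For a solution `y`, Cramer's rule expresses `Δ` times an entry in a column of the minor through the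
entries in the remaining columns. -/
lemma det_mul_eq {S τ : Type*} [CommRing S] [Fintype τ] [DecidableEq τ] {r : ℕ}
    (A : Fin r → τ → S) (c : Fin r → τ) (hc : Function.Injective c) (M : Matrix (Fin r) (Fin r) S)
    (hM : M = Matrix.of fun a b => A a (c b)) (y : τ → S) (hy : ∀ a, ∑ t, A a t * y t = 0)
    (b : Fin r) :
    M.det * y (c b) = - ∑ j with j ∉ Finset.univ.image c, (M.cramer fun a => A a j) b * y j := by
  have h0 : ∑ j, y j • (M.cramer fun a => A a j) = 0 := by
    simp only [← map_smul, ← map_sum]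
    convert! map_zero (M.cramer) using 1
    congr 1
    funext a
    simp only [Finset.sum_apply, Pi.smul_apply, smul_eq_mul, Pi.zero_apply]
    simpa [mul_comm] using hy a
  have h1 := congrFun h0 b
  simp only [Finset.sum_apply, Pi.smul_apply, smul_eq_mul, Pi.zero_apply] at h1
  rw [← Finset.sum_filter_add_sum_filter_not Finset.univ (· ∈ Finset.univ.image c)] at h1
  rw [eq_neg_iff_add_eq_zero, ← h1]
  congr 1
  · rw [Finset.filter_mem_eq_inter, Finset.univ_inter,
      Finset.sum_image (by intro x _ y _ h; exact hc h)]
    rw [Finset.sum_eq_single b]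
    · have := Matrix.cramer_transpose_row_self M.transpose b
      rw [Matrix.transpose_transpose, Matrix.det_transpose] at this
      have h2 : (M.cramer fun a => A a (c b)) b = M.det := by
        have h3 := congrFun this b
        rw [Pi.single_eq_same] at h3
        rw [← h3, hM]; rfl
      rw [h2, mul_comm]
    · intro a _ hab
      have := Matrix.cramer_transpose_row_self M.transpose a
      rw [Matrix.transpose_transpose, Matrix.det_transpose] at this
      have h2 : (M.cramer fun x => A x (c a)) b = 0 := by
        have h3 := congrFun this b
        rw [Pi.single_eq_of_ne (Ne.symm hab)] at h3
        rw [← h3, hM]; rfl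
      rw [h2, mul_zero]
    · simp
  · exact Finset.sum_congr rfl fun j _ => mul_comm _ _

/-! ### Elimination of a variable and Hermann's bound over infinite fields -/

/-- A linear equation for polynomials in `X` of degree less than `L`, with coefficients of degree at
most `d`, amounts to the `L + d` equations between coefficients of powers of `X`. -/
lemma sum_elim_iff {R τ : Type*} [CommRing R] [Fintype τ] {d L : ℕ}
    (P : τ → Polynomial R) (hP : ∀ j, (P j).natDegree ≤ d) (z : τ × Fin L → R) :
    (∀ t : Fin (L + d), ∑ jl : τ × Fin L,
      (if (jl.2 : ℕ) ≤ t then (P jl.1).coeff (t - jl.2) else 0) * z jl = 0) ↔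
    ∑ j, P j * ∑ l : Fin L, Polynomial.C (z (j, l)) * Polynomial.X ^ (l : ℕ) = 0 := by
  have hco : ∀ t : ℕ, (∑ j, P j * ∑ l : Fin L, Polynomial.C (z (j, l)) *
      Polynomial.X ^ (l : ℕ)).coeff t = ∑ jl : τ × Fin L,
      (if (jl.2 : ℕ) ≤ t then (P jl.1).coeff (t - jl.2) else 0) * z jl := by
    intro t
    rw [Fintype.sum_prod_type, Polynomial.finsetSum_coeff]
    refine Finset.sum_congr rfl fun j _ => ?_
    rw [Finset.mul_sum, Polynomial.finsetSum_coeff]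
    refine Finset.sum_congr rfl fun l _ => ?_
    rw [← mul_assoc, Polynomial.coeff_mul_X_pow', Polynomial.coeff_mul_C, ite_mul, zero_mul]
  constructor
  · intro h
    ext t
    rw [Polynomial.coeff_zero, hco]
    by_cases ht : t < L + d
    · exact h ⟨t, ht⟩
    · refine Finset.sum_eq_zero fun jl _ => ?_
      have h1 := jl.2.2
      rw [if_pos (by omega), Polynomial.coeff_eq_zero_of_natDegree_lt, zero_mul]
      exact lt_of_le_of_lt (hP _) (by omega)
  · intro h t
    rw [← hco, h, Polynomial.coeff_zero]

/-- The numerical inductive step: `R (R d + d)` is the number of equations after eliminating a variable,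
and the summand `R d - 1` is the degree in that variable. -/
lemma arith_step {R d D n : ℕ} (hR : 1 ≤ R) (hd : 1 ≤ d)
    (h : D + R * (R * d + d) * d ≤ (2 * (R * (R * d + d)) * d) ^ 2 ^ n) :
    D + (R * d - 1) + R * d ≤ (2 * R * d) ^ 2 ^ (n + 1) := by
  have h1 : (2 * (R * (R * d + d)) * d) ^ 2 ^ n ≤ (2 * R * d) ^ 2 ^ (n + 1) := by
    rw [pow_succ 2 n, mul_comm (2 ^ n) 2, pow_mul]
    refine Nat.pow_le_pow_left ?_ _
    have : R * d + d ≤ 2 * (R * d) := by nlinarith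
    calc 2 * (R * (R * d + d)) * d ≤ 2 * (R * (2 * (R * d))) * d := by gcongr
      _ = (2 * R * d) ^ 2 := by ring
  have h2 : R * d + R * d ≤ R * (R * d + d) * d := by
    calc R * d + R * d = R * (1 + 1) * d := by ring
      _ ≤ R * (R * d + d) * d := by gcongr; nlinarith
  omega

/-- Hermann's bound over an infinite field. The summand `R * d` on the left makes the induction on `n`
work. -/
theorem hermann_infinite {k : Type*} [Field k] [Infinite k] (d : ℕ) (hd : 1 ≤ d) (n : ℕ) :
    ∀ (R : ℕ), 1 ≤ R → ∀ (ι τ : Type) [Fintype ι] [Fintype τ], Fintype.card ι ≤ R →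
    ∀ (A : ι → τ → MvPolynomial (Fin n) k), (∀ i j, (A i j).totalDegree ≤ d) →
    ∀ y : τ → MvPolynomial (Fin n) k, (∀ i, ∑ j, A i j * y j = 0) →
    y ∈ Submodule.span (MvPolynomial (Fin n) k) {y' : τ → MvPolynomial (Fin n) k |
      (∀ i, ∑ j, A i j * y' j = 0) ∧
      ∀ j, (y' j).totalDegree + R * d ≤ (2 * R * d) ^ 2 ^ n} := by
  classical
  induction n with
  | zero =>
    intro R hR ι τ _ _ hι A hA y hy
    refine Submodule.subset_span ⟨hy, fun j => ?_⟩
    have : (y j).totalDegree = 0 := by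
      rw [totalDegree_eq_zero_iff]
      intro m _ x
      exact x.elim0
    rw [this, pow_zero, pow_one]
    nlinarith
  | succ n ih =>
    intro R hR ι τ _ _ hι A hA y hy
    obtain ⟨r, s, c, hs, hc, hΔ, hsol⟩ := exists_minor A
    have hrR : r ≤ R := by
      have := Fintype.card_le_of_injective s hs
      rw [Fintype.card_fin] at this
      omega
    set M : Matrix (Fin r) (Fin r) (MvPolynomial (Fin (n + 1)) k) :=
      Matrix.of fun a b => A (s a) (c b) with hM
    obtain ⟨Θ, hΘ1, hΘ2, hΘ3⟩ := exists_coords M.det hΔ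
    set L := R * d with hL
    have hL1 : 1 ≤ L := Nat.mul_pos hR hd
    have hrL : r * d ≤ L := Nat.mul_le_mul_right d hrR
    have hdegΘ : ∀ (f) (D : ℕ), f.totalDegree ≤ D → (Θ f).degree ≤ D := by
      intro f D hf
      rw [Polynomial.degree_le_iff_coeff_zero]
      intro N hN
      by_contra hne
      have h1 := hΘ1 f N hne
      have h2 : D < N := by exact_mod_cast hN
      omega
    have hcr : ∀ j a, ((M.cramer fun a => A (s a) j) a).totalDegree ≤ L := by
      intro j a
      rw [Matrix.cramer_apply]
      refine (totalDegree_det_le _ fun x z => ?_).trans hrL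
      rw [Matrix.updateCol_apply]
      split_ifs
      · exact hA _ _
      · exact hA _ _
    have hdet : M.det.totalDegree ≤ L := (totalDegree_det_le _ fun x z => hA _ _).trans hrL
    set W := {y' : τ → MvPolynomial (Fin (n + 1)) k | (∀ i, ∑ j, A i j * y' j = 0) ∧
      ∀ j, (y' j).totalDegree + L ≤ (2 * R * d) ^ 2 ^ (n + 1)} with hW
    -- The solutions from Cramer's rule have degree at most `L`, so they lie in `W`.
    choose v hv1 hv2 hv3 using exists_cramer_solution (fun a => A (s a)) c M hM
    have hvW : ∀ j, v j ∈ W := by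
      intro j
      refine ⟨hsol _ (hv1 j), fun t => ?_⟩
      have h1 : (v j t).totalDegree ≤ L := by
        rw [hv2]
        refine (totalDegree_sub _ _).trans (max_le ?_ ?_)
        · split_ifs
          · exact hdet
          · simp
        · refine totalDegree_finsetSum_le fun a _ => ?_
          split_ifs
          · exact hcr _ _
          · simp
      calc (v j t).totalDegree + L ≤ L + L := by omega
        _ = 2 * R * d := by rw [hL]; ring
        _ ≤ _ := Nat.le_self_pow (by positivity) _
    -- Subtracting multiples of them reduces the entries outside the columns `c` modulo `det M`.
    choose Q hQ using fun j => hΘ3 (y j)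
    set y₁ : τ → MvPolynomial (Fin (n + 1)) k := y - ∑ j, Q j • v j with hy₁
    have hy1sol : ∀ i, ∑ j, A i j * y₁ j = 0 := by
      intro i
      have h1 : ∀ j, ∑ t, A i t * v j t = 0 := fun j => (hvW j).1 i
      simp only [hy₁, Pi.sub_apply, Finset.sum_apply, Pi.smul_apply, smul_eq_mul, mul_sub,
        Finset.sum_sub_distrib, hy i, Finset.mul_sum, zero_sub, neg_eq_zero]
      rw [Finset.sum_comm]
      refine Finset.sum_eq_zero fun j _ => ?_
      simp only [mul_left_comm _ (Q j), ← Finset.mul_sum, h1, mul_zero]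
    suffices hy1span : y₁ ∈ Submodule.span (MvPolynomial (Fin (n + 1)) k) W by
      have : y = y₁ + ∑ j, Q j • v j := by rw [hy₁, sub_add_cancel]
      rw [this]
      exact Submodule.add_mem _ hy1span (Submodule.sum_mem _ fun j _ =>
        Submodule.smul_mem _ _ (Submodule.subset_span (hvW j)))
    have hout : ∀ j, j ∉ Set.range c → (Θ (y₁ j)).degree < (Θ M.det).degree := by
      intro j hj
      have : y₁ j = y j - M.det * Q j := by
        simp only [hy₁, Pi.sub_apply, Finset.sum_apply, Pi.smul_apply, smul_eq_mul]
        rw [Finset.sum_congr rfl fun t _ => by rw [hv3 t j hj]]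
        simp [mul_comm]
      rw [this]
      exact hQ j
    -- Entries in the columns `c` are then small too, by comparing degrees in `det_mul_eq`.
    have hall : ∀ j, (Θ (y₁ j)).degree < (L : ℕ) := by
      intro j
      by_cases hj : j ∈ Set.range c
      · obtain ⟨b, rfl⟩ := hj
        have h1 := det_mul_eq (fun a => A (s a)) c hc M hM y₁ (fun a => hy1sol (s a)) b
        have h2 := congrArg Θ h1
        rw [map_mul, map_neg, map_sum] at h2
        have hne : Θ M.det ≠ 0 := by simpa using hΔ
        have h3 : (Θ M.det * Θ (y₁ (c b))).degree < (Θ M.det).degree + (L : ℕ) := by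
          rw [h2, Polynomial.degree_neg]
          refine (Polynomial.degree_sum_le _ _).trans_lt ?_
          rw [Finset.sup_lt_iff]
          · intro j hj
            rw [map_mul, Polynomial.degree_mul]
            have h4 := hout j (by simpa using hj)
            have h5 := hdegΘ _ _ (hcr j b)
            rw [Polynomial.degree_eq_natDegree hne] at h4 ⊢
            by_cases h6 : Θ (y₁ j) = 0
            · rw [h6, Polynomial.degree_zero, WithBot.add_bot]
              exact WithBot.bot_lt_coe _
            · rw [Polynomial.degree_eq_natDegree h6] at h4 ⊢
              calc _ ≤ ((L : ℕ) : WithBot ℕ) + ((Θ (y₁ j)).natDegree : WithBot ℕ) := by gcongr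
                _ < _ := by
                  have h7 : (Θ (y₁ j)).natDegree < (Θ M.det).natDegree := by exact_mod_cast h4
                  have : L + (Θ (y₁ j)).natDegree < (Θ M.det).natDegree + L := by omega
                  exact_mod_cast this
          · rw [Polynomial.degree_eq_natDegree hne]
            exact WithBot.bot_lt_coe _
        rw [Polynomial.degree_mul] at h3
        exact lt_of_add_lt_add_left h3
      · exact (hout j hj).trans_le (hdegΘ _ _ hdet)
    -- `Y z` has entries `∑ l, z (j, l) X ^ l` in the coordinates `Θ`; the next matrix is the system on `z`
    -- expressing that `Y z` solves `A`.
    let Y : (τ × Fin L → MvPolynomial (Fin n) k) → τ → MvPolynomial (Fin (n + 1)) k :=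
      fun z j => Θ.symm (∑ l : Fin L, Polynomial.C (z (j, l)) * Polynomial.X ^ (l : ℕ))
    let A' : Fin r × Fin (L + d) → τ × Fin L → MvPolynomial (Fin n) k := fun at_ jl =>
      if (jl.2 : ℕ) ≤ at_.2 then (Θ (A (s at_.1) jl.1)).coeff (at_.2 - jl.2) else 0
    have hY : ∀ z, (∀ i, ∑ j, A' i j * z j = 0) ↔ ∀ i, ∑ j, A i j * Y z j = 0 := by
      intro z
      have h1 : ∀ a, (∀ t, ∑ j, A' (a, t) j * z j = 0) ↔ ∑ j, A (s a) j * Y z j = 0 := by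
        intro a
        have h2 := sum_elim_iff (d := d) (L := L) (fun j => Θ (A (s a) j)) (fun j =>
          Polynomial.natDegree_le_of_degree_le (hdegΘ _ _ (hA _ _))) z
        refine h2.trans ?_
        rw [← map_eq_zero_iff Θ Θ.injective, map_sum]
        simp [Y]
      rw [Prod.forall]
      constructor
      · intro h
        exact hsol _ fun a => (h1 a).1 (h a)
      · intro h a
        exact (h1 a).2 (h (s a))
    set z : τ × Fin L → MvPolynomial (Fin n) k := fun jl => (Θ (y₁ jl.1)).coeff jl.2 with hz
    have hYz : Y z = y₁ := by
      funext j
      simp only [Y, hz]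
      rw [RingEquiv.symm_apply_eq]
      by_cases h0 : Θ (y₁ j) = 0
      · simp [h0]
      rw [Fin.sum_univ_eq_sum_range (fun l => Polynomial.C ((Θ (y₁ j)).coeff l) *
        Polynomial.X ^ l), ← Polynomial.as_sum_range_C_mul_X_pow']
      exact (Polynomial.natDegree_lt_iff_degree_lt h0).2 (hall j)
    have hzsol := (hY z).2 (by rw [hYz]; exact hy1sol)
    have hspan := ih (R * (R * d + d)) (by nlinarith) _ _ (by
      rw [Fintype.card_prod, Fintype.card_fin, Fintype.card_fin]
      exact Nat.mul_le_mul_right _ hrR) A' (by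
        rintro ⟨a, t⟩ ⟨j, l⟩
        simp only [A']
        split_ifs
        · by_cases h0 : (Θ (A (s a) j)).coeff (t - l) = 0
          · simp [h0]
          · have := hΘ1 _ _ h0
            have := hA (s a) j
            omega
        · simp) z hzsol
    rw [← hYz]
    clear hYz hzsol
    clear_value z
    clear hz
    induction hspan using Submodule.span_induction with
    | mem x hx =>
      refine Submodule.subset_span ⟨(hY x).1 hx.1, fun j => ?_⟩
      have h1 : (Y x j).totalDegree ≤
          (Finset.univ.sup fun l => (x (j, l)).totalDegree) + (L - 1) := by
        simp only [Y, map_sum]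
        refine totalDegree_finsetSum_le fun l _ => ?_
        refine (hΘ2 _ _).trans (add_le_add ?_ (by omega))
        exact Finset.le_sup (f := fun l => (x (j, l)).totalDegree) (Finset.mem_univ l)
      have : Nonempty (Fin L) := ⟨⟨0, hL1⟩⟩
      obtain ⟨l, -, hl⟩ := Finset.exists_mem_eq_sup Finset.univ Finset.univ_nonempty
        (fun l : Fin L => (x (j, l)).totalDegree)
      rw [hl] at h1
      exact (add_le_add_left h1 L).trans (arith_step hR hd (hx.2 (j, l)))
    | zero =>
      have : Y 0 = 0 := by funext j; simp [Y]
      rw [this]; exact Submodule.zero_mem _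
    | add x x' _ _ hx hx' =>
      have : Y (x + x') = Y x + Y x' := by
        funext j
        simp only [Y, Pi.add_apply, map_add, add_mul, Finset.sum_add_distrib]
      rw [this]; exact Submodule.add_mem _ hx hx'
    | smul a x _ hx =>
      have : Y (a • x) = Θ.symm (Polynomial.C a) • Y x := by
        funext j
        simp only [Y, Pi.smul_apply, smul_eq_mul, ← map_mul Θ.symm, Finset.mul_sum, ← mul_assoc,
          map_mul Polynomial.C]
      rw [this]; exact Submodule.smul_mem _ _ hx

/-! ### Cartier operators -/

/-- The Cartier-type operator `∑ c_u x^u ↦ ∑ π (c_{α + qβ}) x^β`. For `q = 1` and `α = 0` it applies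
`π` to all coefficients. -/
noncomputable def cartier {σ k K : Type*} [Field k] [Field K] (q : ℕ) (hq : q ≠ 0)
    (π : K →+ k) (α : σ →₀ ℕ) (f : MvPolynomial σ K) : MvPolynomial σ k :=
  ∑ β ∈ f.support.preimage (fun β => α + q • β) (fun x _ y _ h => by
      have h' : q • x = q • y := add_left_cancel h
      ext i
      have := DFunLike.congr_fun h' i
      simpa [hq] using this),
    monomial β (π (f.coeff (α + q • β)))

section cartier

variable {σ k K : Type*} [Field k] [Field K] {q : ℕ} (hq : q ≠ 0) (π : K →+ k) (α : σ →₀ ℕ)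

lemma coeff_cartier (f : MvPolynomial σ K) (β : σ →₀ ℕ) :
    (cartier q hq π α f).coeff β = π (f.coeff (α + q • β)) := by
  classical
  rw [cartier, coeff_sum]
  simp only [coeff_monomial]
  rw [Finset.sum_ite_eq']
  split_ifs with h
  · rfl
  · have h' : α + q • β ∉ f.support := fun h' => h (Finset.mem_preimage.2 h')
    rw [notMem_support_iff.1 h', map_zero]

lemma totalDegree_cartier_le (f : MvPolynomial σ K) :
    (cartier q hq π α f).totalDegree ≤ f.totalDegree := by
  refine Finset.sup_le fun β hβ => ?_
  rw [mem_support_iff, coeff_cartier] at hβ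
  have h1 : f.coeff (α + q • β) ≠ 0 := fun h => hβ (by rw [h, map_zero])
  have h2 : (α + q • β).degree ≤ f.totalDegree := le_totalDegree (mem_support_iff.2 h1)
  have h3 : β.degree ≤ (α + q • β).degree := by
    rw [map_add, map_nsmul, smul_eq_mul]
    have := Nat.le_mul_of_pos_left β.degree (Nat.pos_of_ne_zero hq)
    omega
  exact h3.trans h2

lemma cartier_add (f g : MvPolynomial σ K) :
    cartier q hq π α (f + g) = cartier q hq π α f + cartier q hq π α g := by
  ext β; simp [coeff_cartier]

lemma cartier_zero : cartier q hq π α 0 = 0 := by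
  ext β; simp [coeff_cartier]

lemma cartier_sum {ι : Type*} (s : Finset ι) (f : ι → MvPolynomial σ K) :
    cartier q hq π α (∑ i ∈ s, f i) = ∑ i ∈ s, cartier q hq π α (f i) := by
  ext β; simp [coeff_cartier, coeff_sum]

/-- If `π` is semilinear with respect to `F`, then so is the operator with respect to
`a ↦ a^F (x₁^q, …, xₙ^q)`. The condition `α i < q` makes `q γ ≤ α + q β` equivalent to `γ ≤ β`. -/
lemma cartier_mul (F : k →+* K) (hπ : ∀ c a, π (F c * a) = c * π a) (hα : ∀ i, α i < q)
    (a : MvPolynomial σ k) (g : MvPolynomial σ K) :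
    cartier q hq π α (expand q (map F a) * g) = a * cartier q hq π α g := by
  induction a using MvPolynomial.induction_on' with
  | add p p' hp hp' => simp only [map_add, add_mul, cartier_add, hp, hp']
  | monomial γ c =>
    ext β
    rw [coeff_cartier, map_monomial, expand_monomial, coeff_monomial_mul', coeff_monomial_mul']
    have hiff : q • γ ≤ α + q • β ↔ γ ≤ β := by
      constructor
      · intro h i
        have h1 := h i
        simp only [Finsupp.smul_apply, Finsupp.add_apply, smul_eq_mul] at h1
        have h2 := hα i
        by_contra! h3
        nlinarith
      · intro h i
        have h1 := Nat.mul_le_mul_left q (h i)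
        simp only [Finsupp.smul_apply, Finsupp.add_apply, smul_eq_mul]
        omega
    simp only [hiff]
    split_ifs with h
    · rw [hπ, coeff_cartier]
      congr 4
      ext i
      have h1 := Nat.mul_le_mul_left q (h i)
      simp only [Finsupp.smul_apply, Finsupp.add_apply, smul_eq_mul, Finsupp.tsub_apply,
        Nat.mul_sub]
      omega
    · exact map_zero π

end cartier

/-! ### Hermann's bound over arbitrary fields -/

/-- A linear system with constant coefficients has its solutions generated by constant ones: the
vectors of coefficients of a solution are again solutions. -/
lemma hermann_constant {σ k ι τ : Type*} [Field k] [Fintype τ]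
    (A : ι → τ → MvPolynomial σ k) (hA : ∀ i j, (A i j).totalDegree ≤ 0)
    (y : τ → MvPolynomial σ k) (hy : ∀ i, ∑ j, A i j * y j = 0) (D : ℕ) :
    y ∈ Submodule.span (MvPolynomial σ k) {y' : τ → MvPolynomial σ k |
      (∀ i, ∑ j, A i j * y' j = 0) ∧ ∀ j, (y' j).totalDegree ≤ D} := by
  classical
  have hA' : ∀ i j, A i j = C ((A i j).coeff 0) := fun i j =>
    totalDegree_eq_zero_iff_eq_C.1 (Nat.le_zero.1 (hA i j))
  have hy' : y = ∑ u ∈ Finset.univ.biUnion fun j => (y j).support,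
      (monomial u (1 : k)) • fun j => C ((y j).coeff u) := by
    funext j
    rw [Finset.sum_apply]
    simp only [Pi.smul_apply, smul_eq_mul, mul_comm (monomial _ _), C_mul_monomial, mul_one]
    conv_lhs => rw [(y j).as_sum]
    refine Finset.sum_subset (fun u hu => ?_) (fun u _ hu => ?_)
    · exact Finset.mem_biUnion.2 ⟨j, Finset.mem_univ _, hu⟩
    · rw [notMem_support_iff.1 hu, monomial_zero]
  rw [hy']
  refine Submodule.sum_mem _ fun u _ => Submodule.smul_mem _ _ (Submodule.subset_span ⟨?_, ?_⟩)
  · intro i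
    have h1 := congrArg (coeff u) (hy i)
    rw [coeff_sum, coeff_zero] at h1
    rw [← map_zero (C : k →+* MvPolynomial σ k), ← h1, map_sum]
    refine Finset.sum_congr rfl fun j _ => ?_
    conv_rhs => rw [hA' i j, coeff_C_mul, map_mul]
    conv_lhs => rw [hA' i j]
  · intro j
    rw [totalDegree_C]
    exact Nat.zero_le _

/-- Hermann's bound for the generators of the solutions of a linear system over an arbitrary field. -/
theorem hermann {k : Type*} [Field k] (d n R : ℕ) (ι τ : Type) [Fintype ι] [Fintype τ]
    (hι : Fintype.card ι ≤ R) (A : ι → τ → MvPolynomial (Fin n) k)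
    (hA : ∀ i j, (A i j).totalDegree ≤ d)
    (y : τ → MvPolynomial (Fin n) k) (hy : ∀ i, ∑ j, A i j * y j = 0) :
    y ∈ Submodule.span (MvPolynomial (Fin n) k) {y' : τ → MvPolynomial (Fin n) k |
      (∀ i, ∑ j, A i j * y' j = 0) ∧ ∀ j, (y' j).totalDegree ≤ (2 * R * d) ^ 2 ^ n} := by
  rcases Nat.eq_zero_or_pos d with rfl | hd
  · exact hermann_constant A hA y hy _
  rcases Nat.eq_zero_or_pos R with rfl | hR
  · have : IsEmpty ι := Fintype.card_eq_zero_iff.1 (Nat.le_zero.1 hι)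
    exact hermann_constant A (fun i => isEmptyElim i) y hy _
  let K := AlgebraicClosure k
  let F : k →+* K := algebraMap k K
  set D := (2 * R * d) ^ 2 ^ n with hD
  set W := {y' : τ → MvPolynomial (Fin n) k |
      (∀ i, ∑ j, A i j * y' j = 0) ∧ ∀ j, (y' j).totalDegree ≤ D} with hW
  have h1 := hermann_infinite (k := K) d hd n R hR ι τ hι (fun i j => map F (A i j))
    (fun i j => (Finset.sup_mono (support_map_subset _ _)).trans (hA i j)) (fun j => map F (y j)) (fun i => by
      simp only [← map_mul, ← map_sum, hy i, map_zero])
  have hlin : ∀ (π : K →ₗ[k] k) (a : MvPolynomial (Fin n) k) (g : MvPolynomial (Fin n) K),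
      cartier 1 one_ne_zero π.toAddMonoidHom 0 (map F a * g)
        = a * cartier 1 one_ne_zero π.toAddMonoidHom 0 g := by
    intro π a g
    have := cartier_mul one_ne_zero π.toAddMonoidHom 0 F (fun c a => by
      simp [F, ← Algebra.smul_def]) (by simp) a g
    simpa using this
  -- Functionals `K → k` on coefficients carry the span over `K[x]` into the span over `k[x]`; a scalar
  -- `c ∈ K` in front of a generator is absorbed into the functional.
  have key : ∀ x ∈ Submodule.span (MvPolynomial (Fin n) K) {y' : τ → MvPolynomial (Fin n) K |
      (∀ i, ∑ j, map F (A i j) * y' j = 0) ∧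
      ∀ j, (y' j).totalDegree + R * d ≤ D}, ∀ π : K →ₗ[k] k,
      (fun j => cartier 1 one_ne_zero π.toAddMonoidHom 0 (x j)) ∈
        Submodule.span (MvPolynomial (Fin n) k) W := by
    intro x hx
    induction hx using Submodule.span_induction with
    | mem x hx =>
      intro π
      refine Submodule.subset_span ⟨fun i => ?_, fun j => ?_⟩
      · simp only [← hlin, ← cartier_sum]
        rw [hx.1 i, cartier_zero]
      · refine (totalDegree_cartier_le _ _ _ _).trans ?_
        have := hx.2 j
        omega
    | zero =>
      intro π
      simp only [Pi.zero_apply, cartier_zero]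
      exact Submodule.zero_mem _
    | add x x' _ _ hx hx' =>
      intro π
      simp only [Pi.add_apply, cartier_add]
      exact Submodule.add_mem _ (hx π) (hx' π)
    | smul a x _ hx =>
      induction a using MvPolynomial.induction_on' with
      | add p p' hp hp' =>
        intro π
        simp only [Pi.smul_apply, smul_eq_mul, add_mul, cartier_add] at hp hp' ⊢
        exact Submodule.add_mem _ (hp π) (hp' π)
      | monomial u c =>
        intro π
        have h2 := Submodule.smul_mem _ (monomial u (1 : k)) (hx (π ∘ₗ LinearMap.mulLeft k c))
        convert! h2 using 1
        funext j
        simp only [Pi.smul_apply, smul_eq_mul]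
        rw [← hlin]
        ext β
        simp only [coeff_cartier, map_monomial, coeff_monomial_mul']
        split_ifs <;> simp
  obtain ⟨π, hπ⟩ := Module.Projective.exists_dual_eq_one k (one_ne_zero : (1 : K) ≠ 0)
  have h3 := key _ h1 π
  convert! h3 using 1
  funext j
  ext β
  have h4 : ∀ a : k, π (F a) = a := fun a => by
    have : F a = a • (1 : K) := Algebra.algebraMap_eq_smul_one a
    rw [this, map_smul, hπ, smul_eq_mul, mul_one]
  simp [coeff_cartier, coeff_map, h4]

/-! ### Linearization of the Frobenius system -/

lemma exists_semilinear {k : Type*} [Field k] (F : k →+* k) (c : k) (hc : c ≠ 0) :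
    ∃ π : k →+ k, (∀ b a, π (F b * a) = b * π a) ∧ π c ≠ 0 := by
  obtain ⟨l, hl⟩ := Module.Projective.exists_dual_ne_zero F.fieldRange hc
  let e : k ≃+* F.fieldRange := RingEquiv.ofBijective F.rangeRestrictField
    ⟨F.rangeRestrictField.injective, fun ⟨x, b, hb⟩ => ⟨b, Subtype.ext hb⟩⟩
  refine ⟨(e.symm : F.fieldRange →+ k).comp l.toAddMonoidHom, fun b a => ?_, ?_⟩
  · have h1 : F b * a = (e b) • a := rfl
    rw [h1]
    simp
  · simpa using hl

/-- A Frobenius equation is equivalent to the linear equations obtained by applying all Cartier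
operators to its coefficients. -/
lemma frobenius_iff_linear {p : ℕ} (hp : p.Prime) {k : Type*} [Field k] [CharP k p] (m : ℕ)
    {n : ℕ} {τ : Type*} [Fintype τ] (f y : τ → MvPolynomial (Fin n) k) (hq : p ^ m ≠ 0) :
    ∑ j, f j * y j ^ p ^ m = 0 ↔
      ∀ (π : k →+ k) (α : Fin n →₀ ℕ), (∀ b a, π (b ^ p ^ m * a) = b * π a) →
        (∀ i, α i < p ^ m) → ∑ j, cartier (p ^ m) hq π α (f j) * y j = 0 := by
  have : ExpChar k p := ExpChar.prime hp
  have hmul : ∀ (π : k →+ k) (α : Fin n →₀ ℕ), (∀ b a, π (b ^ p ^ m * a) = b * π a) →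
        (∀ i, α i < p ^ m) → cartier (p ^ m) hq π α (∑ j, f j * y j ^ p ^ m)
          = ∑ j, cartier (p ^ m) hq π α (f j) * y j := by
    intro π α hπ hα
    rw [cartier_sum]
    refine Finset.sum_congr rfl fun j _ => ?_
    have h1 := cartier_mul hq π α (iterateFrobenius k p m) (by
      simpa [iterateFrobenius_def] using hπ) hα (y j) (f j)
    rw [← map_expand, map_iterateFrobenius_expand] at h1
    rw [mul_comm, h1, mul_comm]
  constructor
  · intro h π α hπ hα
    rw [← hmul π α hπ hα, h, cartier_zero]
  · intro h
    ext u
    rw [coeff_zero]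
    by_contra hne
    -- A functional that does not vanish on the coefficient of `x^u`, with `u = α + p ^ m • β`.
    obtain ⟨π, hπ, hπc⟩ := exists_semilinear (iterateFrobenius k p m) _ hne
    simp only [iterateFrobenius_def] at hπ
    let α : Fin n →₀ ℕ := u.mapRange (· % p ^ m) (by simp)
    let β : Fin n →₀ ℕ := u.mapRange (· / p ^ m) (by simp)
    have hu : α + p ^ m • β = u := by
      ext i
      exact Nat.mod_add_div (u i) (p ^ m)
    have hα : ∀ i, α i < p ^ m := fun i => Nat.mod_lt _ (Nat.pos_of_ne_zero hq)
    have h2 := hmul π α hπ hα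
    rw [h π α hπ hα] at h2
    apply hπc
    rw [← hu, ← coeff_cartier hq π α, h2, coeff_zero]

end FrobHermann

/-- In characteristic `p`, every solution of the homogeneous system
`∑ⱼ f_{ij}·Yⱼ^(p^m) = 0` over `k[x₁,…,xₙ]` is a `k[x₁,…,xₙ]`-linear combination of
solutions of total degree at most `(2·N₁²·N₂·C(B+n,n)·p^(m(n−1))·B)^(2^n)`. -/
theorem frobenius_homogeneous_system_bounded_generators
    (p : ℕ) (hp : p.Prime) (k : Type*) [Field k] [CharP k p]
    (m n N₁ N₂ B : ℕ)
    (f : Fin N₁ → Fin N₂ → MvPolynomial (Fin n) k)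
    (hf : ∀ i j, (f i j).totalDegree ≤ B)
    (y : Fin N₂ → MvPolynomial (Fin n) k)
    (hy : ∀ i, ∑ j, f i j * y j ^ p ^ m = 0) :
    y ∈ Submodule.span (MvPolynomial (Fin n) k)
      {y' : Fin N₂ → MvPolynomial (Fin n) k |
        (∀ i, ∑ j, f i j * y' j ^ p ^ m = 0) ∧
        ∀ j, (y' j).totalDegree ≤
          (2 * N₁ ^ 2 * N₂ * Nat.choose (B + n) n * p ^ (m * (n - 1)) * B) ^ 2 ^ n} := by
  classical
  have hq : p ^ m ≠ 0 := pow_ne_zero _ hp.ne_zero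
  let ι := Fin N₁ × {πα : (k →+ k) × (Fin n →₀ ℕ) //
    (∀ b a, πα.1 (b ^ p ^ m * a) = b * πα.1 a) ∧ ∀ i, πα.2 i < p ^ m}
  let A : ι → Fin N₂ → MvPolynomial (Fin n) k := fun i j =>
    FrobHermann.cartier (p ^ m) hq i.2.1.1 i.2.1.2 (f i.1 j)
  have hAf : ∀ y : Fin N₂ → MvPolynomial (Fin n) k,
      (∀ i, ∑ j, f i j * y j ^ p ^ m = 0) ↔ ∀ i, ∑ j, A i j * y j = 0 := by
    intro y
    simp only [FrobHermann.frobenius_iff_linear hp m _ y hq]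
    constructor
    · rintro h ⟨i, ⟨⟨π, α⟩, h1, h2⟩⟩
      exact h i π α h1 h2
    · intro h i π α h1 h2
      exact h (i, ⟨(π, α), h1, h2⟩)
  obtain ⟨r, s, c, -, hc, -, hsol⟩ := FrobHermann.exists_minor A
  have hr : Fintype.card (Fin r) ≤ N₂ := by
    simpa using Fintype.card_le_of_injective c hc
  have hs : ∀ y : Fin N₂ → MvPolynomial (Fin n) k, (∀ i, ∑ j, f i j * y j ^ p ^ m = 0) ↔
      ∀ a, ∑ j, A (s a) j * y j = 0 := fun y =>
    (hAf y).trans ⟨fun h a => h (s a), hsol y⟩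
  have hA : ∀ a j, (A (s a) j).totalDegree ≤ B := fun a j =>
    (FrobHermann.totalDegree_cartier_le _ _ _ _).trans (hf _ _)
  -- If `r = 0`, every vector is a solution; `N₁ = 0`, where the bound is `0`, falls under this case.
  have hbound : r = 0 ∨ (2 * N₂ * B) ^ 2 ^ n ≤
      (2 * N₁ ^ 2 * N₂ * Nat.choose (B + n) n * p ^ (m * (n - 1)) * B) ^ 2 ^ n := by
    rcases Nat.eq_zero_or_pos r with h0 | h0
    · exact Or.inl h0
    right
    have hN : 0 < N₁ := (s ⟨0, h0⟩).1.pos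
    refine Nat.pow_le_pow_left ?_ _
    have h1 : 0 < N₁ ^ 2 * (Nat.choose (B + n) n * p ^ (m * (n - 1))) :=
      Nat.mul_pos (pow_pos hN 2) (Nat.mul_pos (Nat.choose_pos (by omega)) (pow_pos hp.pos _))
    calc 2 * N₂ * B ≤ 2 * N₂ * B * (N₁ ^ 2 * (Nat.choose (B + n) n * p ^ (m * (n - 1)))) :=
          Nat.le_mul_of_pos_right _ h1
      _ = _ := by ring
  simp only [hs] at hy ⊢
  rcases hbound with rfl | hbound
  · exact FrobHermann.hermann_constant _ (fun a => a.elim0) y hy _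
  · refine Submodule.span_mono ?_ (FrobHermann.hermann B n N₂ (Fin r) (Fin N₂) hr
      (fun a j => A (s a) j) hA y hy)
    rintro y' ⟨h1, h2⟩
    exact ⟨h1, fun j => (h2 j).trans hbound⟩
end

section
/- Let p be a prime, k a field of characteristic p, and m, n, N₁, N₂, B natural numbers. Consider the system of N₁ equations ∑_{j=1}^{N₂} f_{ij}·Y_j^(p^m) = h_i (for i = 1,…,N₁), where the f_{ij} and h_i are polynomials in k[x_1,…,x_n] of total degree at most B. If the system has a solution with all Y_j in the field of fractions k(x_1,…,x_n), then it has a solution y = (y_1,…,y_{N₂}) in k(x_1,…,x_n) such that every y_j can be written as a ratio of polynomials in k[x_1,…,x_n] of total degree at most (2·N₁²·(N₂+1)·C(B+n, n)·p^(m(n−1))·B)^(2^n), where C(B+n, n) is the binomial coefficient. -/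
/-!
Put `q = p ^ m` and `R = k[x₁,…,xₙ]`. The system is *linear* in the `q`-th powers, and it can be
turned into a linear system over `R` in the `Yⱼ` themselves, without any loss of degree.

A *Cartier operator* is an additive map `φ : R → R` with `φ (f * g ^ q) = φ f * g` that does not
raise total degrees. Such maps are obtained by picking the exponents congruent to a fixed `e`
modulo `q` and applying a `q⁻¹`-semilinear functional `k → k` to the coefficients; together they
separate the points of `R` (`exists_cartier_ne_zero`). Hence, after clearing denominators,
`∑ⱼ f_{ij} aⱼ ^ q = hᵢ b ^ q` is equivalent to the (possibly infinite) linear system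
`∑ⱼ φ(f_{ij}) aⱼ = φ(hᵢ) b`, for all Cartier operators `φ`.

A linear system in `N₂` unknowns with coefficients of degree at most `B` that is solvable over the
fraction field has a solution whose numerators and denominator are minors of size at most `N₂`
of its augmented matrix (`exists_linear_solution`), hence of degree at most `N₂ * B`. This is below
the bound claimed in the theorem.
-/

open MvPolynomial

/-! ### Cartier operators -/

/-- Linear functionals separate points. The `k`-linearity is unbundled because the module structure
is later taken on `k` itself, where it competes with the standard one. -/
lemma exists_functional_ne_zero {k V : Type*} [Field k] [AddCommGroup V] [Module k V]
    (v : V) (hv : v ≠ 0) :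
    ∃ l : V →+ k, (∀ (c : k) (x : V), l (c • x) = c * l x) ∧ l v ≠ 0 := by
  obtain ⟨g, hg⟩ : ∃ g : Module.Dual k V, g v ≠ 0 := by
    by_contra hcon
    push Not at hcon
    exact hv ((Module.forall_dual_apply_eq_zero_iff k v).1 hcon)
  exact ⟨g.toAddMonoidHom, fun c x => by simp, hg⟩

/-- A `q⁻¹`-semilinear functional on `k` (with `q = p ^ m`) not vanishing at a given `a ≠ 0`: a
linear functional for the `k`-vector space structure on `k` obtained by restriction of scalars
along the `q`-power Frobenius. -/
lemma exists_semilinear_ne_zero (p : ℕ) [Fact p.Prime] (k : Type*) [Field k] [CharP k p] (m : ℕ)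
    (a : k) (ha : a ≠ 0) :
    ∃ l : k →+ k, (∀ x c, l (x * c ^ p ^ m) = l x * c) ∧ l a ≠ 0 := by
  let inst : Module k k := Module.compHom k (iterateFrobenius k p m)
  obtain ⟨l, hl, hla⟩ := @exists_functional_ne_zero k k _ _ inst a ha
  refine ⟨l, fun x c => ?_, hla⟩
  rw [mul_comm (l x), ← hl]
  congr 1
  change _ = iterateFrobenius k p m c * x
  rw [iterateFrobenius_def, mul_comm]

section Cartier

variable {σ k : Type*} [Field k]

/-- The polynomial `∑ₛ l(c_{qs+e}) xˢ` attached to `f = ∑ₜ c_t xᵗ`. The sum runs over the quotients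
by `q` of the exponents of `f`, which exhausts the nonzero terms when all `eᵢ < q`. -/
noncomputable def cartierFun (q : ℕ) (l : k →+ k) (e : σ →₀ ℕ) (f : MvPolynomial σ k) :
    MvPolynomial σ k := by
  classical
  exact ∑ s ∈ f.support.image (Finsupp.mapRange (· / q) (Nat.zero_div q)),
    monomial s (l (coeff (q • s + e) f))

lemma coeff_cartierFun {q : ℕ} (l : k →+ k) {e : σ →₀ ℕ} (he : ∀ i, e i < q)
    (f : MvPolynomial σ k) (s : σ →₀ ℕ) :
    coeff s (cartierFun q l e f) = l (coeff (q • s + e) f) := by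
  classical
  unfold cartierFun
  rw [coeff_sum]
  simp only [coeff_monomial]
  rw [Finset.sum_ite_eq']
  split_ifs with hs
  · rfl
  · have : coeff (q • s + e) f = 0 := by
      by_contra hne
      refine hs (Finset.mem_image.2 ⟨q • s + e, mem_support_iff.2 hne, ?_⟩)
      ext i
      have hq : 0 < q := lt_of_le_of_lt (Nat.zero_le _) (he i)
      simp [Nat.mul_add_div hq, Nat.div_eq_of_lt (he i)]
    rw [this, map_zero]

lemma cartierFun_add {q : ℕ} (l : k →+ k) {e : σ →₀ ℕ} (he : ∀ i, e i < q)
    (f g : MvPolynomial σ k) :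
    cartierFun q l e (f + g) = cartierFun q l e f + cartierFun q l e g := by
  ext s
  simp [coeff_cartierFun l he]

lemma cartierFun_mul_pow (p : ℕ) [Fact p.Prime] [CharP k p] {m : ℕ} (l : k →+ k)
    (hl : ∀ x c, l (x * c ^ p ^ m) = l x * c) {e : σ →₀ ℕ} (he : ∀ i, e i < p ^ m)
    (f g : MvPolynomial σ k) :
    cartierFun (p ^ m) l e (f * g ^ p ^ m) = cartierFun (p ^ m) l e f * g := by
  classical
  induction g using MvPolynomial.induction_on' with
  | monomial t c =>
    ext s
    rw [coeff_cartierFun l he, monomial_pow, coeff_mul_monomial', coeff_mul_monomial',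
      coeff_cartierFun l he]
    have hiff : p ^ m • t ≤ p ^ m • s + e ↔ t ≤ s := by
      constructor
      · intro hle i
        have h1 := hle i
        have h2 := he i
        simp only [Finsupp.smul_apply, Finsupp.add_apply, smul_eq_mul] at h1
        by_contra hlt
        have h3 : s i + 1 ≤ t i := by omega
        have h4 := Nat.mul_le_mul_left (p ^ m) h3
        rw [mul_add] at h4
        omega
      · intro hle i
        have h4 := Nat.mul_le_mul_left (p ^ m) (hle i)
        simp only [Finsupp.smul_apply, Finsupp.add_apply, smul_eq_mul]
        omega
    by_cases hts : t ≤ s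
    · rw [if_pos (hiff.2 hts), if_pos hts, hl]
      have : p ^ m • s + e - p ^ m • t = p ^ m • (s - t) + e := by
        ext i
        have h4 := Nat.mul_le_mul_left (p ^ m) (hts i)
        simp only [Finsupp.smul_apply, Finsupp.add_apply, Finsupp.tsub_apply, smul_eq_mul,
          Nat.mul_sub]
        omega
      rw [this]
    · rw [if_neg (fun h => hts (hiff.1 h)), if_neg hts, map_zero]
  | add g₁ g₂ h₁ h₂ =>
    rw [add_pow_char_pow, mul_add, cartierFun_add l he, h₁, h₂, mul_add]

lemma totalDegree_cartierFun_le {q : ℕ} (hq : 0 < q) (l : k →+ k) {e : σ →₀ ℕ}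
    (he : ∀ i, e i < q) (f : MvPolynomial σ k) :
    (cartierFun q l e f).totalDegree ≤ f.totalDegree := by
  refine Finset.sup_le fun s hs => ?_
  rw [mem_support_iff, coeff_cartierFun l he] at hs
  have hmem : q • s + e ∈ f.support := by
    rw [mem_support_iff]
    intro h0
    exact hs (by rw [h0, map_zero])
  refine le_trans ?_ (le_totalDegree hmem)
  change s.degree ≤ (q • s + e).degree
  rw [map_add, map_nsmul, smul_eq_mul]
  nlinarith [Nat.zero_le s.degree, Nat.zero_le e.degree]

/-- The `q⁻¹`-semilinear additive endomorphisms of the polynomial ring that do not raise total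
degrees. -/
def IsCartier (q : ℕ) (φ : MvPolynomial σ k →+ MvPolynomial σ k) : Prop :=
  (∀ f g, φ (f * g ^ q) = φ f * g) ∧ ∀ f, (φ f).totalDegree ≤ f.totalDegree

/-- Cartier operators separate points: if `c_t ≠ 0`, use the exponent class of `t` modulo `q` and
a functional not vanishing at `c_t`. -/
lemma exists_cartier_ne_zero (p : ℕ) [Fact p.Prime] [CharP k p] (m : ℕ)
    (f : MvPolynomial σ k) (hf : f ≠ 0) :
    ∃ φ : MvPolynomial σ k →+ MvPolynomial σ k, IsCartier (p ^ m) φ ∧ φ f ≠ 0 := by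
  have hq : 0 < p ^ m := pow_pos (Fact.out : p.Prime).pos m
  obtain ⟨t, ht⟩ := exists_coeff_ne_zero hf
  obtain ⟨l, hl, hlt⟩ := exists_semilinear_ne_zero p k m _ ht
  let e : σ →₀ ℕ := t.mapRange (· % p ^ m) (Nat.zero_mod _)
  have he : ∀ i, e i < p ^ m := fun i => by
    simpa [e] using Nat.mod_lt (t i) hq
  let s : σ →₀ ℕ := t.mapRange (· / p ^ m) (Nat.zero_div _)
  have hse : p ^ m • s + e = t := by
    ext i
    simp [s, e, Nat.div_add_mod]
  refine ⟨AddMonoidHom.mk' (cartierFun (p ^ m) l e) (cartierFun_add l he),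
    ⟨cartierFun_mul_pow p l hl he, totalDegree_cartierFun_le hq l he⟩, fun h0 => hlt ?_⟩
  have h1 : coeff s (cartierFun (p ^ m) l e f) = 0 := by
    have : cartierFun (p ^ m) l e f = 0 := h0
    rw [this, coeff_zero]
  rwa [coeff_cartierFun l he, hse] at h1

end Cartier

/-! ### Linear systems over a polynomial ring -/

lemma totalDegree_det_le {σ k : Type*} [Field k] {r B : ℕ}
    (M : Matrix (Fin r) (Fin r) (MvPolynomial σ k)) (hM : ∀ i j, (M i j).totalDegree ≤ B) :
    M.det.totalDegree ≤ r * B := by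
  rw [Matrix.det_apply]
  refine totalDegree_finsetSum_le fun τ _ => ?_
  refine le_trans (totalDegree_smul_le _ _) ?_
  refine le_trans (totalDegree_finsetProd _ _) ?_
  refine le_trans (Finset.sum_le_card_nsmul _ _ B fun i _ => hM _ _) ?_
  simp

/-- The matrix with rows `i, rows 0, rows 1, …` and columns `v, col 0, col 1, …`, the columns being
given as functions on the set of all rows. -/
def bordered {ι R : Type*} {r : ℕ} (i : ι) (rows : Fin r → ι) (v : ι → R)
    (col : Fin r → ι → R) : Matrix (Fin (r + 1)) (Fin (r + 1)) R :=
  fun a b => (Fin.cons v col : Fin (r + 1) → ι → R) b ((Fin.cons i rows : Fin (r + 1) → ι) a)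

/-- Cramer's rule for a possibly infinite set of equations. Take a nonzero minor of the coefficient
matrix of maximal size `r`. Every minor of size `r + 1` vanishes, hence so does every bordering of
the chosen minor by the right-hand side, which is a combination of the columns; expanding along the
bordering row gives the solution. -/
lemma exists_linear_solution {σ k ι : Type*} [Field k] {N B : ℕ}
    (G : ι → Fin N → MvPolynomial σ k) (H : ι → MvPolynomial σ k)
    (hG : ∀ i j, (G i j).totalDegree ≤ B) (hH : ∀ i, (H i).totalDegree ≤ B)
    (u : Fin N → MvPolynomial σ k) (d : MvPolynomial σ k) (hd : d ≠ 0)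
    (hu : ∀ i, ∑ j, G i j * u j = H i * d) :
    ∃ (a : Fin N → MvPolynomial σ k) (b : MvPolynomial σ k), b ≠ 0 ∧
      (∀ i, ∑ j, G i j * a j = H i * b) ∧ (∀ j, (a j).totalDegree ≤ N * B) ∧
      b.totalDegree ≤ N * B := by
  classical
  let P : ℕ → Prop := fun r => ∃ (rows : Fin r → ι) (cols : Fin r → Fin N),
    (Matrix.of fun a b => G (rows a) (cols b)).det ≠ 0
  have hP0 : P 0 := ⟨Fin.elim0, Fin.elim0, by simp⟩
  have hPle : ∀ r, P r → r ≤ N := by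
    rintro r ⟨rows, cols, hdet⟩
    have hinj : Function.Injective cols := by
      intro b b' hbb
      by_contra hne
      exact hdet (Matrix.det_zero_of_column_eq hne fun a => by simp [hbb])
    simpa using Fintype.card_le_of_injective cols hinj
  obtain ⟨r, ⟨rows, cols, hdet⟩, hmax⟩ : ∃ r, P r ∧ ¬ P (r + 1) := by
    by_contra hcon
    push Not at hcon
    have hall : ∀ r, P r := fun r => by
      induction r with
      | zero => exact hP0
      | succ r ih => exact hcon r ih
    exact absurd (hPle _ (hall (N + 1))) (by omega)
  have hrN := hPle r ⟨rows, cols, hdet⟩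
  let col : Fin r → ι → MvPolynomial σ k := fun c i => G i (cols c)
  have hbord : ∀ i j, (bordered i rows (fun i => G i j) col).det = 0 := by
    intro i j
    by_contra hne
    refine hmax ⟨Fin.cons i rows, Fin.cons j cols, ?_⟩
    convert hne using 2
    ext1 a b
    refine Fin.cases ?_ (fun c => ?_) b <;> simp [bordered, col]
  have hbordH : ∀ i, (bordered i rows H col).det = 0 := by
    intro i
    -- Expanding along the first column shows linearity of the determinant in that column.
    have hexp : ∀ v : ι → MvPolynomial σ k, (bordered i rows v col).det =
        ∑ a : Fin (r + 1), (-1) ^ (a : ℕ) * v ((Fin.cons i rows : Fin (r + 1) → ι) a) *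
          (Matrix.of fun (x y : Fin r) =>
            col y ((Fin.cons i rows : Fin (r + 1) → ι) (a.succAbove x))).det := by
      intro v
      rw [Matrix.det_succ_column_zero]
      rfl
    have hmul : (bordered i rows H col).det * d = 0 := by
      have hsum : (bordered i rows H col).det * d =
          ∑ j, (bordered i rows (fun i => G i j) col).det * u j := by
        simp only [hexp, Finset.sum_mul]
        rw [Finset.sum_comm]
        refine Finset.sum_congr rfl fun a _ => ?_
        rw [mul_right_comm, mul_assoc _ _ d, ← hu, Finset.mul_sum, Finset.sum_mul]
        refine Finset.sum_congr rfl fun j _ => ?_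
        ring
      rw [hsum]
      exact Finset.sum_eq_zero fun j _ => by rw [hbord, zero_mul]
    exact (mul_eq_zero.1 hmul).resolve_right hd
  let minor : Fin (r + 1) → MvPolynomial σ k := fun b =>
    (Matrix.of fun (x y : Fin r) =>
      (Fin.cons H col : Fin (r + 1) → ι → MvPolynomial σ k) (b.succAbove y) (rows x)).det
  have hminor : ∀ b, (minor b).totalDegree ≤ N * B := by
    intro b
    refine le_trans (totalDegree_det_le _ fun x y => ?_) (Nat.mul_le_mul_right B hrN)
    rw [Matrix.of_apply]
    refine Fin.cases ?_ (fun c => ?_) (b.succAbove y)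
    · simpa using hH _
    · simpa [col] using hG _ _
  have hrow : ∀ i, H i * minor 0 +
      ∑ c : Fin r, (-1) ^ (c.succ : ℕ) * G i (cols c) * minor c.succ = 0 := by
    intro i
    have := hbordH i
    rw [Matrix.det_succ_row_zero, Fin.sum_univ_succ] at this
    rw [← this, Fin.val_zero, pow_zero, one_mul]
    rfl
  refine ⟨fun j => ∑ c : Fin r, if cols c = j then (-1) ^ (c : ℕ) * minor c.succ else 0,
    minor 0, ?_, ?_, ?_, hminor 0⟩
  · have : minor 0 = (Matrix.of fun a b => G (rows a) (cols b)).det := by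
      simp [minor, col]
    rwa [this]
  · intro i
    rw [eq_neg_of_add_eq_zero_left (hrow i), ← Finset.sum_neg_distrib]
    simp only [Finset.mul_sum, mul_ite, mul_zero]
    rw [Finset.sum_comm]
    refine Finset.sum_congr rfl fun c _ => ?_
    rw [Finset.sum_ite_eq, if_pos (Finset.mem_univ _), Fin.val_succ, pow_succ]
    ring
  · intro j
    refine totalDegree_finsetSum_le fun c _ => ?_
    split_ifs
    · rcases neg_one_pow_eq_or (MvPolynomial σ k) (c : ℕ) with h1 | h1 <;> rw [h1]
      · simpa using hminor c.succ
      · simpa using hminor c.succ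
    · simp

/-! ### Frobenius systems -/

/-- In characteristic `p`, if the system `∑ⱼ f_{ij}·Yⱼ^(p^m) = hᵢ` over
`k[x₁,…,xₙ]` has a solution in `k(x₁,…,xₙ)`, then it has a solution whose entries are
ratios of polynomials of total degree at most
`(2·N₁²·(N₂+1)·C(B+n,n)·p^(m(n−1))·B)^(2^n)`. -/
theorem frobenius_system_over_function_field_bounded_solution
    (p : ℕ) (hp : p.Prime) (k : Type*) [Field k] [CharP k p]
    (m n N₁ N₂ B : ℕ)
    (f : Fin N₁ → Fin N₂ → MvPolynomial (Fin n) k)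
    (h : Fin N₁ → MvPolynomial (Fin n) k)
    (hf : ∀ i j, (f i j).totalDegree ≤ B)
    (hh : ∀ i, (h i).totalDegree ≤ B)
    (hsol : ∃ z : Fin N₂ → FractionRing (MvPolynomial (Fin n) k),
      ∀ i, ∑ j, algebraMap (MvPolynomial (Fin n) k)
          (FractionRing (MvPolynomial (Fin n) k)) (f i j) * z j ^ p ^ m =
        algebraMap (MvPolynomial (Fin n) k)
          (FractionRing (MvPolynomial (Fin n) k)) (h i)) :
    ∃ y : Fin N₂ → FractionRing (MvPolynomial (Fin n) k),
      (∀ i, ∑ j, algebraMap (MvPolynomial (Fin n) k)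
          (FractionRing (MvPolynomial (Fin n) k)) (f i j) * y j ^ p ^ m =
        algebraMap (MvPolynomial (Fin n) k)
          (FractionRing (MvPolynomial (Fin n) k)) (h i)) ∧
      ∀ j, ∃ a b : MvPolynomial (Fin n) k, b ≠ 0 ∧
        a.totalDegree ≤
          (2 * N₁ ^ 2 * (N₂ + 1) * Nat.choose (B + n) n * p ^ (m * (n - 1)) * B) ^ 2 ^ n ∧
        b.totalDegree ≤
          (2 * N₁ ^ 2 * (N₂ + 1) * Nat.choose (B + n) n * p ^ (m * (n - 1)) * B) ^ 2 ^ n ∧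
        y j = algebraMap (MvPolynomial (Fin n) k)
            (FractionRing (MvPolynomial (Fin n) k)) a /
          algebraMap (MvPolynomial (Fin n) k)
            (FractionRing (MvPolynomial (Fin n) k)) b := by
  classical
  have : Fact p.Prime := ⟨hp⟩
  rcases Nat.eq_zero_or_pos N₁ with hN | hN
  · subst hN
    exact ⟨0, fun i => i.elim0, fun j => ⟨0, 1, one_ne_zero, by simp, by simp, by simp⟩⟩
  have hbound : N₂ * B ≤
      (2 * N₁ ^ 2 * (N₂ + 1) * Nat.choose (B + n) n * p ^ (m * (n - 1)) * B) ^ 2 ^ n := by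
    refine le_trans ?_ (Nat.le_self_pow (pow_ne_zero n two_ne_zero) _)
    refine Nat.mul_le_mul_right B ?_
    have h1 : 0 < Nat.choose (B + n) n := Nat.choose_pos (Nat.le_add_left n B)
    have h2 : 0 < p ^ (m * (n - 1)) := pow_pos hp.pos _
    have h3 : 0 < 2 * N₁ ^ 2 := by positivity
    calc N₂ ≤ 1 * (N₂ + 1) * 1 * 1 := by omega
      _ ≤ _ := by gcongr <;> omega
  set K := FractionRing (MvPolynomial (Fin n) k)
  set ψ := algebraMap (MvPolynomial (Fin n) k) K
  have hψ : Function.Injective ψ := IsFractionRing.injective _ _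
  -- Clearing the common denominator `b` in the system.
  have hclear : ∀ (a : Fin N₂ → MvPolynomial (Fin n) k) (b : MvPolynomial (Fin n) k), b ≠ 0 →
      ((∀ i, ∑ j, ψ (f i j) * (ψ (a j) / ψ b) ^ p ^ m = ψ (h i)) ↔
        ∀ i, ∑ j, f i j * a j ^ p ^ m = h i * b ^ p ^ m) := by
    intro a b hb
    have hb' : ψ b ^ p ^ m ≠ 0 := pow_ne_zero _ fun h0 => hb (hψ (by rw [h0, map_zero]))
    refine forall_congr' fun i => ?_
    have : ∑ j, ψ (f i j) * (ψ (a j) / ψ b) ^ p ^ m =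
        ψ (∑ j, f i j * a j ^ p ^ m) / ψ b ^ p ^ m := by
      rw [map_sum, Finset.sum_div]
      refine Finset.sum_congr rfl fun j _ => ?_
      rw [map_mul, map_pow, div_pow, mul_div_assoc]
    rw [this, div_eq_iff hb', ← map_pow, ← map_mul, hψ.eq_iff]
  obtain ⟨z, hz⟩ := hsol
  obtain ⟨d, hd⟩ := IsLocalization.exist_integer_multiples_of_finite
    (nonZeroDivisors (MvPolynomial (Fin n) k)) z
  choose u hu using hd
  have hd0 : (d : MvPolynomial (Fin n) k) ≠ 0 := nonZeroDivisors.coe_ne_zero d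
  have hzu : ∀ j, z j = ψ (u j) / ψ d := by
    intro j
    have hd' : ψ d ≠ 0 := fun h0 => hd0 (hψ (by rw [h0, map_zero]))
    rw [eq_div_iff hd', mul_comm]
    have h1 := hu j
    rw [Algebra.smul_def] at h1
    exact h1.symm
  have hsys := (hclear u d hd0).1 (by simpa only [hzu] using hz)
  let ι := Fin N₁ × {φ : MvPolynomial (Fin n) k →+ MvPolynomial (Fin n) k // IsCartier (p ^ m) φ}
  obtain ⟨a, b, hb, hab, hadeg, hbdeg⟩ := exists_linear_solution (ι := ι) (B := B)
    (fun x j => x.2.1 (f x.1 j)) (fun x => x.2.1 (h x.1))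
    (fun x j => (x.2.2.2 _).trans (hf _ _)) (fun x => (x.2.2.2 _).trans (hh _)) u d hd0 (by
      rintro ⟨i, φ, hφ⟩
      have h1 := congrArg φ (hsys i)
      simpa only [map_sum, hφ.1] using h1)
  refine ⟨fun j => ψ (a j) / ψ b, (hclear a b hb).2 fun i => ?_, fun j =>
    ⟨a j, b, hb, (hadeg j).trans hbound, hbdeg.trans hbound, rfl⟩⟩
  by_contra hne
  obtain ⟨φ, hφ, hφne⟩ := exists_cartier_ne_zero p m _ (sub_ne_zero.2 hne)
  apply hφne
  rw [map_sub, map_sum, sub_eq_zero]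
  simpa only [hφ.1] using hab (i, ⟨φ, hφ⟩)
end

section
/- Let n ≥ 1 and D be natural numbers, and let S be a set of vectors in ℕ^n such that every v ∈ S satisfies v_1 + v_2 + … + v_n ≤ D, and for any two distinct u, v ∈ S it is not the case that u_i ≤ v_i for all i (i.e., no element of S divides another when the vectors are viewed as exponent vectors of monomials). Then S is finite and has cardinality at most (D+1)^(n−1). -/
/-! Forgetting the first coordinate is injective on `S`: two vectors of `S` that agree in all
other coordinates are comparable, hence equal. Every coordinate of a vector in `S` is at most
its total degree, so the image lies in `{0, …, D}^(n-1)`. -/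

/-- An antichain (under coordinatewise divisibility) of exponent vectors
in `ℕⁿ` of total degree at most `D` has at most `(D+1)^(n−1)` elements. -/
theorem monomial_antichain_card_bound
    (n D : ℕ) (hn : 1 ≤ n) (S : Set (Fin n → ℕ))
    (hdeg : ∀ v ∈ S, ∑ i, v i ≤ D)
    (hanti : ∀ u ∈ S, ∀ v ∈ S, u ≠ v → ¬ ∀ i, u i ≤ v i) :
    S.Finite ∧ S.ncard ≤ (D + 1) ^ (n - 1) := by
  obtain ⟨m, rfl⟩ : ∃ m, n = m + 1 := ⟨n - 1, by omega⟩
  let T : Finset (Fin m → ℕ) := Fintype.piFinset fun _ => Finset.range (D + 1)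
  have hmaps : Set.MapsTo (Fin.tail : (Fin (m + 1) → ℕ) → (Fin m → ℕ)) S T := by
    intro v hv
    simp only [T, Finset.mem_coe, Fintype.mem_piFinset, Finset.mem_range]
    intro i
    have h : v i.succ ≤ ∑ j, v j :=
      Finset.single_le_sum (fun _ _ => Nat.zero_le _) (Finset.mem_univ i.succ)
    exact Nat.lt_succ_of_le (h.trans (hdeg v hv))
  have hinj : Set.InjOn (Fin.tail : (Fin (m + 1) → ℕ) → (Fin m → ℕ)) S := by
    intro u hu v hv huv
    have hs : ∀ i : Fin m, u i.succ = v i.succ := fun i => congrFun huv i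
    by_contra hne
    rcases le_total (u 0) (v 0) with h | h
    · exact hanti u hu v hv hne (Fin.cases h fun i => (hs i).le)
    · exact hanti v hv u hu (Ne.symm hne) (Fin.cases h fun i => (hs i).ge)
  refine ⟨Set.Finite.of_injOn hmaps hinj T.finite_toSet, ?_⟩
  calc S.ncard ≤ (T : Set (Fin m → ℕ)).ncard :=
        Set.ncard_le_ncard_of_injOn _ hmaps hinj T.finite_toSet
    _ = (D + 1) ^ (m + 1 - 1) := by simp [T, Set.ncard_coe_finset, -Fintype.coe_piFinset]
end

section
/- Let k be a field, n ≥ 1 and d ≥ 1 natural numbers, let I be a nonzero ideal of k[x_1,…,x_n] generated by polynomials of total degree at most d, and let f be a nonzero polynomial of total degree at most d. Then the quotient ideal I : (f) = {g ∈ k[x_1,…,x_n] : f·g ∈ I} is generated by polynomials of total degree at most 2·(d+1)^(2^(n+1)). -/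
/-!
The elements of `I : (f)` are the first entries of the syzygies of the row `(f, f₁, …, fₛ)`, where
`f₁, …, fₛ` generate `I`. So it suffices to generate the syzygies of this row in bounded degree, with
a bound independent of `s`. This is Hermann's method, for matrices `A` of degree at most `d` with
`d` times the number of rows at most `M`, by induction on the number of variables.

Take a nonzero minor `Δ` of maximal size (`exists_maximal_minor`); its degree is at most `M`. Over an
infinite field a linear change of coordinates makes `Δ` monic up to a unit in the first variable
(`exists_coordinates`). Cramer's rule gives syzygies of degree at most `M`, with `Δ` in one position
outside the minor and zeros in the others. Reducing a syzygy modulo these makes its entries outside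
the minor of smaller degree than `Δ` in the first variable, and by Cramer's rule again all its entries
then have degree less than `M` in that variable (`step_of_unit`). The coefficients of such a syzygy
solve a linear system in one variable less, still of degree at most `d`, with `M + d` times as many
rows (`coeffMatrix`). Hence the bound `B` satisfies `B (n + 1) M = M + B n (M * (M + d))` and
`B 0 M = 0`, so that `B n d ≤ (2 * d) ^ 2 ^ n ≤ (d + 1) ^ 2 ^ (n + 1)` (`syzygyBound_add_le`).

For an arbitrary field `k` the bound is obtained over the algebraic closure and descends to `k` by
applying `k`-linear functionals to coefficients (`SyzygiesGeneratedInDegree.of_baseChange`).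
-/

open MvPolynomial Matrix

/-! ### Degrees and maximal minors -/

/-- The syzygy module `{v | A v = 0}` of a polynomial matrix `A` is generated by syzygies all of
whose entries have total degree at most `D`. -/
def SyzygiesGeneratedInDegree {σ K ι κ : Type*} [CommRing K] [Fintype κ]
    (A : Matrix ι κ (MvPolynomial σ K)) (D : ℕ) : Prop :=
  ∀ v, A *ᵥ v = 0 → v ∈ Submodule.span (MvPolynomial σ K)
    {w | A *ᵥ w = 0 ∧ ∀ j, (w j).totalDegree ≤ D}

theorem totalDegree_det_le_s10 {σ K : Type*} [CommRing K] {r : ℕ}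
    (N : Matrix (Fin r) (Fin r) (MvPolynomial σ K)) {d : ℕ}
    (hN : ∀ i j, (N i j).totalDegree ≤ d) : N.det.totalDegree ≤ r * d := by
  rw [Matrix.det_apply]
  refine totalDegree_finsetSum_le fun p _ => ?_
  refine (totalDegree_smul_le _ _).trans ((totalDegree_finsetProd _ _).trans ?_)
  refine (Finset.sum_le_card_nsmul _ _ d fun i _ => hN _ _).trans ?_
  simp

/-- Substitutions by polynomials of degree at most one do not raise the total degree. -/
theorem totalDegree_aeval_le {σ τ K : Type*} [Field K] (g : σ → MvPolynomial τ K)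
    (hg : ∀ i, (g i).totalDegree ≤ 1) (p : MvPolynomial σ K) :
    (aeval g p).totalDegree ≤ p.totalDegree := by
  rw [aeval_def, eval₂_eq]
  refine totalDegree_finsetSum_le fun m hm => ?_
  refine (totalDegree_mul _ _).trans ?_
  refine le_trans ?_ (le_totalDegree hm)
  rw [algebraMap_eq, totalDegree_C, zero_add, Finsupp.sum]
  refine (totalDegree_finsetProd _ _).trans (Finset.sum_le_sum fun i _ => ?_)
  refine (totalDegree_pow _ _).trans ?_
  simpa using Nat.mul_le_mul_left (m i) (hg i)

/-- A nonzero minor of `A` of maximal size `r`, together with Cramer's rule: since every bordered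
minor of size `r + 1` vanishes, the columns of `A` are, up to the factor `det`, explicit combinations
of the columns selected by `b`. -/
theorem exists_maximal_minor {R ι κ : Type*} [CommRing R] [IsDomain R] [Fintype ι] [DecidableEq ι]
    [Fintype κ] [DecidableEq κ]
    (A : Matrix ι κ R) : ∃ (r : ℕ) (a : Fin r → ι) (b : Fin r → κ), r ≤ Fintype.card ι ∧
      (A.submatrix a b).det ≠ 0 ∧
      (A.submatrix a b).det • A =
        A.submatrix id b * ((A.submatrix a b).adjugate * A.submatrix a id) := by
  classical
  let P : ℕ → Prop := fun r => ∃ (a : Fin r → ι) (b : Fin r → κ), (A.submatrix a b).det ≠ 0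
  have hP0 : P 0 := ⟨Fin.elim0, Fin.elim0, by simp⟩
  have hPle : ∀ r, P r → r ≤ Fintype.card ι := by
    rintro r ⟨a, b, h⟩
    have : Function.Injective a := by
      intro s t hst
      by_contra hne
      exact h (det_zero_of_row_eq hne (by ext j; simp [hst]))
    simpa using Fintype.card_le_of_injective a this
  obtain ⟨r, ⟨a, b, hab⟩, hmax⟩ : ∃ r, P r ∧ ¬ P (r + 1) := by
    refine ⟨_, Nat.findGreatest_spec (Nat.zero_le (Fintype.card ι)) hP0, fun h => ?_⟩
    have := Nat.le_findGreatest (hPle _ h) h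
    omega
  refine ⟨r, a, b, hPle _ ⟨a, b, hab⟩, hab, ?_⟩
  ext i j
  set M := A.submatrix a b with hM
  let B : Matrix (Fin r) (Fin 1) R := of fun s _ => A (a s) j
  let C : Matrix (Fin 1) (Fin r) R := of fun _ s => A i (b s)
  let D : Matrix (Fin 1) (Fin 1) R := of fun _ _ => A i j
  have hdet : (fromBlocks M B C D).det = 0 := by
    by_contra h
    refine hmax ⟨Sum.elim a (fun _ => i) ∘ finSumFinEquiv.symm,
      Sum.elim b (fun _ => j) ∘ finSumFinEquiv.symm, ?_⟩
    rw [← submatrix_submatrix, det_submatrix_equiv_self]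
    convert h using 2
    ext (s | s) (t | t) <;> rfl
  -- Column operations turn the bordered matrix into a block triangular one.
  have hmul : fromBlocks M B C D * fromBlocks 1 (-(M.adjugate * B)) 0 (M.det • 1) =
      fromBlocks M 0 C (M.det • D - C * (M.adjugate * B)) := by
    rw [fromBlocks_multiply]
    congr 1
    · simp
    · rw [Matrix.mul_neg, ← Matrix.mul_assoc, mul_adjugate]; simp
    · simp
    · simp [sub_eq_neg_add]
  have h := congrArg det hmul
  rw [det_mul, hdet, zero_mul, det_fromBlocks_zero₁₂] at h
  have h2 := (mul_eq_zero.mp h.symm).resolve_left hab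
  rw [det_fin_one, Matrix.sub_apply, sub_eq_zero] at h2
  simpa [C, D, Matrix.mul_apply, B] using h2

/-! ### Linear changes of coordinates -/

/-- Restricting `q` to the line through the origin and `p` gives the univariate polynomial whose
coefficients are the values at `p` of the homogeneous components of `q`. -/
theorem coeff_aeval_line {σ K : Type*} [Field K] (p : σ → K) (e : ℕ) (q : MvPolynomial σ K) :
    (aeval (fun i => Polynomial.C (p i) * Polynomial.X) q).coeff e =
      eval p (homogeneousComponent e q) := by
  induction q using MvPolynomial.induction_on' with
  | monomial m a =>
    have h1 : aeval (fun i => Polynomial.C (p i) * Polynomial.X) (monomial m a) =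
        Polynomial.C (a * m.prod fun i k => p i ^ k) * Polynomial.X ^ m.degree := by
      rw [aeval_monomial]
      simp only [mul_pow, Finsupp.prod_mul, Polynomial.C_mul, ← Polynomial.C_pow]
      rw [Finsupp.prod, Finsupp.prod, Finset.prod_pow_eq_pow_sum, mul_assoc, Finsupp.prod, map_prod]
      rfl
    rw [h1, Polynomial.coeff_C_mul, Polynomial.coeff_X_pow]
    rw [homogeneousComponent_of_mem (n := m.degree) (isHomogeneous_monomial a rfl)]
    by_cases h : m.degree = e
    · simp [h, eval_monomial]
    · simp [Ne.symm h]
  | add p q hp hq => simp [hp, hq]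

/-- If setting all variables but the first to zero turns `g i` into `p i * X`, it turns the
substituted polynomial `q(g)` into the restriction of `q` to the line spanned by `p`. -/
theorem map_constantCoeff_finSuccEquiv_aeval {K : Type*} [Field K] {n : ℕ} (p : Fin (n + 1) → K)
    (g : Fin (n + 1) → MvPolynomial (Fin (n + 1)) K)
    (hg : ∀ i, (finSuccEquiv K n (g i)).map constantCoeff = Polynomial.C (p i) * Polynomial.X)
    (q : MvPolynomial (Fin (n + 1)) K) :
    (finSuccEquiv K n (aeval g q)).map constantCoeff =
      aeval (fun i => Polynomial.C (p i) * Polynomial.X) q := by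
  induction q using MvPolynomial.induction_on with
  | C a => simp [algebraMap_eq, finSuccEquiv_apply]
  | add p q hp hq => rw [map_add, map_add, Polynomial.map_add, hp, hq, map_add]
  | mul_X q i hq => rw [map_mul, map_mul, Polynomial.map_mul, hq, map_mul, aeval_X, aeval_X, hg]

/-- Over an infinite field some linear change of coordinates makes a nonzero polynomial monic, up to
a unit, in the first variable. Both the change and its inverse are degree non-increasing. -/
theorem exists_coordinates {K : Type*} [Field K] [Infinite K] {n : ℕ}
    (q : MvPolynomial (Fin (n + 1)) K) (hq : q ≠ 0) :
    ∃ φ : MvPolynomial (Fin (n + 1)) K ≃ₐ[K] MvPolynomial (Fin (n + 1)) K,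
      (∀ p, (φ p).totalDegree ≤ p.totalDegree) ∧
      (∀ p, (φ.symm p).totalDegree ≤ p.totalDegree) ∧
      IsUnit (finSuccEquiv K n (φ q)).leadingCoeff := by
  set e := q.totalDegree with he
  have hqe : homogeneousComponent e q * X 0 ≠ 0 := by
    refine mul_ne_zero ?_ (X_ne_zero _)
    obtain ⟨m, hm, hme⟩ := Finset.exists_mem_eq_sup q.support (support_nonempty.mpr hq)
      (fun s => s.sum fun _ k => k)
    intro h
    have := congrArg (coeff m) h
    rw [coeff_homogeneousComponent, if_pos (by rw [he, totalDegree, hme]; rfl)] at this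
    exact (mem_support_iff.mp hm) (by simpa using this)
  obtain ⟨p, hp⟩ : ∃ p, eval p (homogeneousComponent e q * X 0) ≠ 0 := by
    by_contra! h
    exact hqe (MvPolynomial.funext fun x => by simpa using h x)
  -- The factor `X 0` makes `p 0` nonzero, so that the substitution `g` below is invertible.
  rw [eval_mul, eval_X, mul_ne_zero_iff] at hp
  obtain ⟨hp1, hp0⟩ := hp
  let g : Fin (n + 1) → MvPolynomial (Fin (n + 1)) K :=
    Fin.cases (C (p 0) * X 0) (fun i => X i.succ + C (p i.succ) * X 0)
  let g' : Fin (n + 1) → MvPolynomial (Fin (n + 1)) K :=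
    Fin.cases (C (p 0)⁻¹ * X 0) (fun i => X i.succ - C (p i.succ * (p 0)⁻¹) * X 0)
  have hCX : ∀ (c : K), (C c * X 0 : MvPolynomial (Fin (n + 1)) K).totalDegree ≤ 1 := fun c =>
    (totalDegree_mul _ _).trans (by simp)
  have hg : ∀ i, (g i).totalDegree ≤ 1 := by
    refine Fin.cases (hCX _) fun i => ?_
    exact (totalDegree_add _ _).trans (max_le (by simp) (hCX _))
  have hg' : ∀ i, (g' i).totalDegree ≤ 1 := by
    refine Fin.cases (hCX _) fun i => ?_
    exact (totalDegree_sub _ _).trans (max_le (by simp) (hCX _))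
  have hinv : (C (p 0) * C (p 0)⁻¹ : MvPolynomial (Fin (n + 1)) K) = 1 := by
    rw [← C_mul, mul_inv_cancel₀ hp0, C_1]
  let φ : MvPolynomial (Fin (n + 1)) K ≃ₐ[K] MvPolynomial (Fin (n + 1)) K :=
    AlgEquiv.ofAlgHom (aeval g) (aeval g')
      (by
        ext1 i
        refine Fin.cases ?_ (fun i => ?_) i
        · simp only [g, g', AlgHom.comp_apply, aeval_X, map_mul, algHom_C, algebraMap_eq,
            Fin.cases_zero, AlgHom.id_apply]
          linear_combination (X 0) * hinv
        · simp only [g, g', AlgHom.comp_apply, aeval_X, map_mul, map_sub, algHom_C, algebraMap_eq,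
            Fin.cases_zero, Fin.cases_succ, AlgHom.id_apply]
          linear_combination (- C (p i.succ) * X 0) * hinv)
      (by
        ext1 i
        refine Fin.cases ?_ (fun i => ?_) i
        · simp only [g, g', AlgHom.comp_apply, aeval_X, map_mul, algHom_C, algebraMap_eq,
            Fin.cases_zero, AlgHom.id_apply]
          linear_combination (X 0) * hinv
        · simp only [g, g', AlgHom.comp_apply, aeval_X, map_mul, map_add, algHom_C, algebraMap_eq,
            Fin.cases_zero, Fin.cases_succ, AlgHom.id_apply]
          ring)
  refine ⟨φ, totalDegree_aeval_le g hg, totalDegree_aeval_le g' hg', ?_⟩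
  set P := finSuccEquiv K n (φ q) with hP
  have hφ : (φ q).totalDegree ≤ e := totalDegree_aeval_le g hg q
  have hcc : constantCoeff (P.coeff e) ≠ 0 := by
    have hcomp : P.map constantCoeff = aeval (fun i => Polynomial.C (p i) * Polynomial.X) q := by
      refine map_constantCoeff_finSuccEquiv_aeval p g (Fin.cases ?_ fun i => ?_) q
      · simp [g, finSuccEquiv_apply]
      · simp [g, finSuccEquiv_apply]
    rw [← Polynomial.coeff_map, hcomp, coeff_aeval_line]
    exact hp1
  have hne : P.coeff e ≠ 0 := fun h => hcc (by simp [h])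
  have hnat : P.natDegree = e := by
    refine le_antisymm ?_ (Polynomial.le_natDegree_of_ne_zero hne)
    rw [hP, natDegree_finSuccEquiv]
    exact (degreeOf_le_totalDegree _ _).trans hφ
  have htot := totalDegree_coeff_finSuccEquiv_add_le (φ q) e hne
  rw [Polynomial.leadingCoeff, hnat]
  have h0 : (P.coeff e).totalDegree = 0 := by
    change (P.coeff e).totalDegree + e ≤ _ at htot
    omega
  rw [totalDegree_eq_zero_iff_eq_C] at h0
  rw [h0]
  exact (IsUnit.mk0 _ hcc).map C

/-- Generation of syzygies in bounded degree may be checked after a change of coordinates whose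
inverse does not raise degrees. -/
theorem SyzygiesGeneratedInDegree.of_map {σ K ι κ : Type*} [Field K] [Fintype κ]
    {A : Matrix ι κ (MvPolynomial σ K)} {D : ℕ}
    (φ : MvPolynomial σ K ≃ₐ[K] MvPolynomial σ K)
    (hφ : ∀ p, (φ.symm p).totalDegree ≤ p.totalDegree)
    (h : SyzygiesGeneratedInDegree (A.map φ) D) : SyzygiesGeneratedInDegree A D := by
  have hker : ∀ w, A.map φ *ᵥ w = 0 → A *ᵥ (fun j => φ.symm (w j)) = 0 := by
    intro w hw
    ext1 i
    apply φ.injective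
    have := congrFun hw i
    simp only [mulVec, dotProduct, map_apply, Pi.zero_apply] at this ⊢
    simpa using this
  have hspan : ∀ w ∈ Submodule.span (MvPolynomial σ K)
      {w | A.map φ *ᵥ w = 0 ∧ ∀ j, (w j).totalDegree ≤ D}, (fun j => φ.symm (w j)) ∈
      Submodule.span (MvPolynomial σ K) {w | A *ᵥ w = 0 ∧ ∀ j, (w j).totalDegree ≤ D} := by
    intro w hw
    induction hw using Submodule.span_induction with
    | mem w hw =>
      exact Submodule.subset_span ⟨hker w hw.1, fun j => (hφ _).trans (hw.2 j)⟩
    | zero =>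
      convert Submodule.zero_mem (Submodule.span (MvPolynomial σ K) _)
      ext1 j
      simp
    | add x y _ _ hx hy =>
      convert Submodule.add_mem _ hx hy
      ext1 j
      simp
    | smul c x _ hx =>
      convert Submodule.smul_mem _ (φ.symm c) hx
      ext1 j
      simp
  intro v hv
  have := hspan (fun j => φ (v j)) (h _ ?_)
  · simpa using this
  · ext1 i
    have := congrArg φ (congrFun hv i)
    simpa [mulVec, dotProduct] using this

/-! ### Elimination of one variable -/

/-- Division with remainder by a polynomial whose leading coefficient is a unit. -/
theorem exists_div_mod {R : Type*} [CommRing R] [IsDomain R] (p q : Polynomial R)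
    (hq : IsUnit q.leadingCoeff) :
    ∃ c r, p = q * c + r ∧ r.degree < q.degree := by
  obtain ⟨u, hu⟩ := hq
  have hm : (q * Polynomial.C (↑u⁻¹ : R)).Monic := by
    rw [Polynomial.Monic, Polynomial.leadingCoeff_mul, Polynomial.leadingCoeff_C, ← hu]
    simp
  refine ⟨Polynomial.C (↑u⁻¹ : R) * (p /ₘ (q * Polynomial.C (↑u⁻¹ : R))),
    p %ₘ (q * Polynomial.C (↑u⁻¹ : R)), ?_, ?_⟩
  · rw [← mul_assoc, add_comm, Polynomial.modByMonic_add_div]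
  · refine (Polynomial.degree_modByMonic_lt _ hm).trans_le ?_
    rw [Polynomial.degree_mul, Polynomial.degree_C (Units.ne_zero _), add_zero]

theorem degree_mul_lt_nat {R : Type*} [CommRing R] [IsDomain R] {p q : Polynomial R} {a b : ℕ}
    (hp : p.natDegree ≤ a) (hq : q.degree < b) : (p * q).degree < (a + b : ℕ) := by
  rcases eq_or_ne p 0 with rfl | hp0
  · simp
  rcases eq_or_ne q 0 with rfl | hq0
  · simp
  rw [Polynomial.degree_eq_natDegree hq0] at hq
  rw [Polynomial.degree_eq_natDegree (mul_ne_zero hp0 hq0), Polynomial.natDegree_mul hp0 hq0]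
  have : q.natDegree < b := by exact_mod_cast hq
  exact_mod_cast (by omega : p.natDegree + q.natDegree < a + b)

theorem degree_lt_of_mul_lt {R : Type*} [CommRing R] [IsDomain R] {p q : Polynomial R} {a : ℕ}
    (hp0 : p ≠ 0) (h : (p * q).degree < (a + p.natDegree : ℕ)) : q.degree < a := by
  rcases eq_or_ne q 0 with rfl | hq0
  · simp
  rw [Polynomial.degree_eq_natDegree (mul_ne_zero hp0 hq0), Polynomial.natDegree_mul hp0 hq0] at h
  rw [Polynomial.degree_eq_natDegree hq0]
  have : p.natDegree + q.natDegree < a + p.natDegree := by exact_mod_cast h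
  exact_mod_cast (by omega : q.natDegree < a)

/-- The vector of polynomials in `n + 1` variables whose `j`-th entry has `w (j, t)`, for `t < M`,
as its coefficient at the `t`-th power of the first variable. -/
noncomputable def assemble {K κ : Type*} [Field K] {n M : ℕ}
    (w : κ × Fin M → MvPolynomial (Fin n) K) : κ → MvPolynomial (Fin (n + 1)) K :=
  fun j => (finSuccEquiv K n).symm
    (∑ t : Fin M, Polynomial.X ^ (t : ℕ) * Polynomial.C (w (j, t)))

/-- The linear system over the polynomials in the last `n` variables which expresses, for a vector
of degree less than `M` in the first variable, the vanishing of the first `N` coefficients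
(with respect to the first variable) of its product with `A`. -/
noncomputable def coeffMatrix {K ι κ : Type*} [Field K] {n : ℕ}
    (A : Matrix ι κ (MvPolynomial (Fin (n + 1)) K)) (N M : ℕ) :
    Matrix (ι × Fin N) (κ × Fin M) (MvPolynomial (Fin n) K) :=
  of fun x y => (finSuccEquiv K n (A x.1 y.1) * Polynomial.X ^ (y.2 : ℕ)).coeff x.2

theorem totalDegree_coeffMatrix {K ι κ : Type*} [Field K] {n : ℕ}
    {A : Matrix ι κ (MvPolynomial (Fin (n + 1)) K)} {N M d : ℕ}
    (hA : ∀ i j, (A i j).totalDegree ≤ d) (x : ι × Fin N) (y : κ × Fin M) :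
    (coeffMatrix A N M x y).totalDegree ≤ d := by
  simp only [coeffMatrix, of_apply, Polynomial.coeff_mul_X_pow']
  split_ifs
  · by_cases h : (finSuccEquiv K n (A x.1 y.1)).coeff (x.2 - y.2) = 0
    · simp [h]
    · have := totalDegree_coeff_finSuccEquiv_add_le _ _ h
      have := hA x.1 y.1
      omega
  · simp

theorem natDegree_finSuccEquiv_le {K : Type*} [Field K] {n : ℕ}
    (p : MvPolynomial (Fin (n + 1)) K) : (finSuccEquiv K n p).natDegree ≤ p.totalDegree := by
  rw [natDegree_finSuccEquiv]
  exact degreeOf_le_totalDegree _ _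

theorem coeff_mulVec_assemble {K ι κ : Type*} [Field K] [Fintype κ] {n : ℕ}
    (A : Matrix ι κ (MvPolynomial (Fin (n + 1)) K)) (N M : ℕ)
    (w : κ × Fin M → MvPolynomial (Fin n) K) (i : ι) (u : Fin N) :
    (finSuccEquiv K n ((A *ᵥ assemble w) i)).coeff u = (coeffMatrix A N M *ᵥ w) (i, u) := by
  simp only [mulVec, dotProduct, map_sum, map_mul, assemble, AlgEquiv.apply_symm_apply,
    Polynomial.finsetSum_coeff, Fintype.sum_prod_type, coeffMatrix, of_apply, Finset.mul_sum]
  refine Finset.sum_congr rfl fun j _ => Finset.sum_congr rfl fun t _ => ?_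
  rw [← mul_assoc, Polynomial.coeff_mul_C]

/-- Since `A` has degree at most `d`, the product of `A` with a vector of degree less than `M` in the
first variable has only `M + d` coefficients, so `coeffMatrix A (M + d) M` describes exactly the
syzygies of `A` of degree less than `M` in the first variable. -/
theorem mulVec_assemble_eq_zero_iff {K ι κ : Type*} [Field K] [Fintype κ] {n : ℕ}
    {A : Matrix ι κ (MvPolynomial (Fin (n + 1)) K)} {M d : ℕ}
    (hA : ∀ i j, (A i j).totalDegree ≤ d) (w : κ × Fin M → MvPolynomial (Fin n) K) :
    A *ᵥ assemble w = 0 ↔ coeffMatrix A (M + d) M *ᵥ w = 0 := by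
  constructor
  · intro h
    ext1 ⟨i, u⟩
    rw [← coeff_mulVec_assemble, h]
    simp
  · intro h
    ext1 i
    apply (finSuccEquiv K n).injective
    rw [Pi.zero_apply, map_zero]
    ext1 u
    rw [Polynomial.coeff_zero]
    by_cases hu : u < M + d
    · have := coeff_mulVec_assemble A (M + d) M w i ⟨u, hu⟩
      rw [h] at this
      exact this
    · apply Polynomial.coeff_eq_zero_of_degree_lt
      refine lt_of_lt_of_le ?_ (Nat.cast_le.mpr (not_lt.mp hu))
      rw [← Polynomial.mem_degreeLT, mulVec, dotProduct, map_sum]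
      refine Submodule.sum_mem _ fun j _ => ?_
      rw [map_mul, add_comm, Polynomial.mem_degreeLT]
      refine degree_mul_lt_nat ((natDegree_finSuccEquiv_le _).trans (hA i j)) ?_
      rw [assemble, AlgEquiv.apply_symm_apply, ← Polynomial.mem_degreeLT]
      refine Submodule.sum_mem _ fun t _ => ?_
      rw [Polynomial.mem_degreeLT, Polynomial.X_pow_mul]
      exact (Polynomial.degree_C_mul_X_pow_le _ _).trans_lt (by exact_mod_cast t.2)

theorem assemble_coeff {K κ : Type*} [Field K] {n M : ℕ}
    (v : κ → MvPolynomial (Fin (n + 1)) K) (hv : ∀ j, (finSuccEquiv K n (v j)).degree < M) :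
    assemble (fun x : κ × Fin M => (finSuccEquiv K n (v x.1)).coeff x.2) = v := by
  ext1 j
  rw [assemble, AlgEquiv.symm_apply_eq,
    Fin.sum_univ_eq_sum_range
      (fun t => Polynomial.X ^ t * Polynomial.C ((finSuccEquiv K n (v j)).coeff t)) M]
  ext1 u
  simp only [Polynomial.X_pow_mul, Polynomial.finsetSum_coeff, Polynomial.coeff_C_mul_X_pow]
  rw [Finset.sum_ite_eq]
  split_ifs with h
  · rfl
  · rw [Finset.mem_range, not_lt] at h
    exact (Polynomial.coeff_eq_zero_of_degree_lt
      ((hv j).trans_le (Nat.cast_le.mpr h))).symm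

theorem totalDegree_assemble_le {K κ : Type*} [Field K] {n M D : ℕ}
    (w : κ × Fin M → MvPolynomial (Fin n) K) (hw : ∀ x, (w x).totalDegree ≤ D) (j : κ) :
    (assemble w j).totalDegree ≤ M + D := by
  rw [assemble, map_sum]
  refine totalDegree_finsetSum_le fun t _ => ?_
  have hC : ∀ q, (finSuccEquiv K n).symm (Polynomial.C q) = rename Fin.succ q := by
    intro q
    rw [AlgEquiv.symm_apply_eq]
    induction q using MvPolynomial.induction_on with
    | C a => simp [finSuccEquiv_apply]
    | add p q hp hq => rw [map_add, hp, hq, map_add, map_add]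
    | mul_X q i hq => rw [map_mul, hq, map_mul, map_mul, rename_X, finSuccEquiv_X_succ]
  have hX : (finSuccEquiv K n).symm Polynomial.X = X 0 := by
    rw [AlgEquiv.symm_apply_eq, finSuccEquiv_X_zero]
  rw [map_mul, map_pow, hC, hX]
  refine (totalDegree_mul _ _).trans (add_le_add ?_ ((totalDegree_rename_le _ _).trans (hw _)))
  rw [totalDegree_X_pow]
  exact t.2.le

theorem assemble_mem_span {K ι κ : Type*} [Field K] [Fintype κ] {n M d D : ℕ}
    {A : Matrix ι κ (MvPolynomial (Fin (n + 1)) K)} (hA : ∀ i j, (A i j).totalDegree ≤ d)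
    {w : κ × Fin M → MvPolynomial (Fin n) K}
    (hw : w ∈ Submodule.span (MvPolynomial (Fin n) K)
      {w | coeffMatrix A (M + d) M *ᵥ w = 0 ∧ ∀ j, (w j).totalDegree ≤ D}) :
    assemble w ∈ Submodule.span (MvPolynomial (Fin (n + 1)) K)
      {w | A *ᵥ w = 0 ∧ ∀ j, (w j).totalDegree ≤ M + D} := by
  induction hw using Submodule.span_induction with
  | mem w hw =>
    exact Submodule.subset_span ⟨(mulVec_assemble_eq_zero_iff hA w).mpr hw.1,
      totalDegree_assemble_le w hw.2⟩
  | zero =>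
    convert Submodule.zero_mem (Submodule.span (MvPolynomial (Fin (n + 1)) K) _)
    ext1 j
    simp [assemble]
  | add x y _ _ hx hy =>
    convert Submodule.add_mem _ hx hy
    ext1 j
    simp only [assemble, Pi.add_apply, Polynomial.C_add, mul_add, Finset.sum_add_distrib]
    exact map_add _ _ _
  | smul c x _ hx =>
    convert Submodule.smul_mem _ ((finSuccEquiv K n).symm (Polynomial.C c)) hx
    ext1 j
    simp only [assemble, Pi.smul_apply, smul_eq_mul, ← map_mul, Finset.mul_sum]
    refine congrArg _ (Finset.sum_congr rfl fun t _ => ?_)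
    rw [Polynomial.C_mul, mul_left_comm]

/-- Elimination of the first variable. The hypotheses `h1`, `h2` are what Cramer's rule gives
for a maximal minor `Δ` of `A` on the columns selected by `b`, where `G` is the adjugate extended by
zero to all rows of `A`; only these identities matter. When `Δ` is monic up to a unit in the first variable, subtracting multiples of the Cramer
syzygies from a syzygy leaves one of degree less than `M` in the first variable, which is governed
by `coeffMatrix`. -/
theorem step_of_unit {K ι κ : Type*} [Field K] [Fintype ι] [Fintype κ] [DecidableEq κ]
    {n M d D r : ℕ}
    (A : Matrix ι κ (MvPolynomial (Fin (n + 1)) K)) (hA : ∀ i j, (A i j).totalDegree ≤ d)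
    (Δ : MvPolynomial (Fin (n + 1)) K) (hΔ : IsUnit (finSuccEquiv K n Δ).leadingCoeff)
    (hΔM : Δ.totalDegree ≤ M)
    (b : Fin r → κ) (G : Matrix (Fin r) ι (MvPolynomial (Fin (n + 1)) K))
    (hG : ∀ s j, ((G * A) s j).totalDegree ≤ M)
    (h1 : Δ • A = A.submatrix id b * (G * A))
    (h2 : (G * A).submatrix id b = Δ • (1 : Matrix (Fin r) (Fin r) _))
    (hrec : SyzygiesGeneratedInDegree (coeffMatrix A (M + d) M) D) :
    SyzygiesGeneratedInDegree A (M + D) := by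
  classical
  set E := finSuccEquiv K n
  have hEΔ : E Δ ≠ 0 := by
    intro h
    rw [h] at hΔ
    simp at hΔ
  intro v hv
  set T := Submodule.span (MvPolynomial (Fin (n + 1)) K)
    {w | A *ᵥ w = 0 ∧ ∀ j, (w j).totalDegree ≤ M + D}
  -- The Cramer syzygies are the columns of `U`.
  let J : Matrix κ (Fin r) (MvPolynomial (Fin (n + 1)) K) :=
    (1 : Matrix κ κ (MvPolynomial (Fin (n + 1)) K)).submatrix id b
  let U : Matrix κ κ (MvPolynomial (Fin (n + 1)) K) :=
    Δ • (1 : Matrix κ κ (MvPolynomial (Fin (n + 1)) K)) - J * (G * A)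
  have hAU : A * U = 0 := by
    have : A * J = A.submatrix id b := by
      ext i s
      simp [J, Matrix.mul_apply, Matrix.one_apply]
    rw [Matrix.mul_sub, ← Matrix.mul_assoc A J, this, ← h1]
    simp
  have hUdeg : ∀ j l, (U j l).totalDegree ≤ M := by
    intro j l
    refine (totalDegree_sub _ _).trans (max_le ?_ ?_)
    · rw [Matrix.smul_apply, Matrix.one_apply]
      split_ifs <;> simp [hΔM]
    · rw [Matrix.mul_apply]
      refine totalDegree_finsetSum_le fun s _ => ?_
      simp only [J, submatrix_apply, Matrix.one_apply]
      split_ifs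
      · simpa using hG s l
      · simp
  have hUT : ∀ q, U *ᵥ q ∈ T := by
    intro q
    rw [mulVec_eq_sum]
    refine Submodule.sum_mem _ fun j _ => ?_
    have : (fun i => U i j) ∈ T := by
      refine Submodule.subset_span ⟨?_, fun i => (hUdeg i j).trans (Nat.le_add_right _ _)⟩
      ext1 i
      exact congrFun (congrFun hAU i) j
    convert Submodule.smul_mem T (q j) this using 1
    ext1 i
    exact mul_comm _ _
  -- Divide every entry of `v` by `Δ` as polynomials in the first variable.
  choose q ρ hqρ hρ using fun j => exists_div_mod (E (v j)) (E Δ) hΔ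
  set v' := v - U *ᵥ (fun j => E.symm (q j)) with hv'
  have hAv' : A *ᵥ v' = 0 := by
    rw [hv', mulVec_sub, hv, mulVec_mulVec, hAU, zero_mulVec, sub_zero]
  have hout : ∀ j, (∀ s, b s ≠ j) → E (v' j) = ρ j := by
    intro j hj
    have : (U *ᵥ (fun j => E.symm (q j))) j = Δ * E.symm (q j) := by
      simp only [U, sub_mulVec, smul_mulVec, one_mulVec, Pi.sub_apply,
        Pi.smul_apply, smul_eq_mul]
      rw [sub_eq_self, ← mulVec_mulVec, mulVec, dotProduct]
      refine Finset.sum_eq_zero fun s _ => ?_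
      have hJ : J j s = 0 := Matrix.one_apply_ne (hj s).symm
      rw [hJ, zero_mul]
    rw [hv', Pi.sub_apply, this, map_sub, map_mul, AlgEquiv.apply_symm_apply, hqρ]
    ring
  have hnatΔ : (E Δ).natDegree ≤ M := (natDegree_finSuccEquiv_le _).trans hΔM
  have hdegout : ∀ j, (∀ s, b s ≠ j) → (E (v' j)).degree < (E Δ).natDegree := by
    intro j hj
    rw [hout j hj, ← Polynomial.degree_eq_natDegree hEΔ]
    exact hρ j
  have hdeg : ∀ j, (E (v' j)).degree < M := by
    intro j
    by_cases hj : ∀ s, b s ≠ j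
    · exact (hdegout j hj).trans_le (by exact_mod_cast hnatΔ)
    · push Not at hj
      obtain ⟨s, rfl⟩ := hj
      -- The Cramer relation expresses `Δ` times the entry at `b s` through the entries outside
      -- the minor.
      have hc : ∑ j, (G * A) s j * v' j = 0 := by
        have : (G * A) *ᵥ v' = 0 := by rw [← mulVec_mulVec, hAv', mulVec_zero]
        exact congrFun this s
      have hcb : ∀ s', (G * A) s (b s') = if s = s' then Δ else 0 := by
        intro s'
        have := congrFun (congrFun h2 s) s'
        simpa [Matrix.one_apply] using this
      rw [← Finset.add_sum_erase _ _ (Finset.mem_univ (b s)), hcb, if_pos rfl] at hc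
      apply degree_lt_of_mul_lt hEΔ
      rw [← map_mul, eq_neg_of_add_eq_zero_left hc, map_neg, Polynomial.degree_neg, map_sum,
        ← Polynomial.mem_degreeLT]
      refine Submodule.sum_mem _ fun j hj => ?_
      rw [Polynomial.mem_degreeLT, map_mul]
      by_cases hj' : ∀ s, b s ≠ j
      · exact degree_mul_lt_nat ((natDegree_finSuccEquiv_le _).trans (hG s j)) (hdegout j hj')
      · push Not at hj'
        obtain ⟨s', rfl⟩ := hj'
        have hne : s ≠ s' := by
          rintro rfl
          simp at hj
        rw [hcb, if_neg hne]
        simp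
  have hv'T : v' ∈ T := by
    rw [← assemble_coeff v' hdeg] at hAv' ⊢
    exact assemble_mem_span hA (hrec _ ((mulVec_assemble_eq_zero_iff hA _).mp hAv'))
  have : v = v' + U *ᵥ (fun j => E.symm (q j)) := by rw [hv']; abel
  rw [this]
  exact Submodule.add_mem _ hv'T (hUT _)

/-! ### The degree bound over an infinite field -/

/-- Degree bound for the syzygies of a matrix of degree at most `d` in `n` variables, where `M`
bounds `d` times the number of rows. Eliminating one variable multiplies the number of rows by
`M + d`. -/
def syzygyBound (d : ℕ) : ℕ → ℕ → ℕ
  | 0, _ => 0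
  | n + 1, M => M + syzygyBound d n (M * (M + d))

/-- The summand `2 * M` makes the induction close: it absorbs the term `M` added at each
elimination. -/
theorem syzygyBound_add_le {d : ℕ} (hd : 1 ≤ d) (n M : ℕ) (hM : d ≤ M) :
    syzygyBound d n M + 2 * M ≤ (2 * M) ^ 2 ^ n := by
  induction n generalizing M with
  | zero => simp [syzygyBound]
  | succ n ih =>
    have h1 : d ≤ M * (M + d) := by nlinarith
    have h2 : 2 * (M * (M + d)) ≤ (2 * M) ^ 2 := by nlinarith
    have h3 : 3 * M ≤ 2 * (M * (M + d)) := by nlinarith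
    have h4 := ih _ h1
    have h5 := Nat.pow_le_pow_left h2 (2 ^ n)
    rw [← pow_mul, ← pow_succ'] at h5
    rw [syzygyBound]
    omega

/-- Hermann's bound: it depends on the number of rows of `A` but not on the number of columns. -/
theorem syzygiesGeneratedInDegree_of_infinite {K : Type*} [Field K] [Infinite K] {d : ℕ} (n : ℕ)
    {ι : Type*} {κ : Type*} [Fintype ι] [Fintype κ]
    (A : Matrix ι κ (MvPolynomial (Fin n) K)) (hA : ∀ i j, (A i j).totalDegree ≤ d)
    (M : ℕ) (hM : Fintype.card ι * d ≤ M) :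
    SyzygiesGeneratedInDegree A (syzygyBound d n M) := by
  classical
  induction n generalizing ι κ M with
  | zero =>
    intro v hv
    refine Submodule.subset_span ⟨hv, fun j => ?_⟩
    rw [eq_C_of_isEmpty (v j), totalDegree_C]
    exact Nat.zero_le _
  | succ n ih =>
    obtain ⟨r, a, b, hr, hdet, hminor⟩ := exists_maximal_minor A
    have hrM : r * d ≤ M := (Nat.mul_le_mul_right d hr).trans hM
    obtain ⟨φ, hφ, hφ', hunit⟩ := exists_coordinates _ hdet
    let G : Matrix (Fin r) ι (MvPolynomial (Fin (n + 1)) K) :=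
      (A.submatrix a b).adjugate *
        (1 : Matrix ι ι (MvPolynomial (Fin (n + 1)) K)).submatrix a id
    have hG : G * A = (A.submatrix a b).adjugate * A.submatrix a id := by
      rw [Matrix.mul_assoc]
      congr 1
      ext s j
      simp [Matrix.mul_apply, Matrix.one_apply]
    have hGdeg : ∀ s j, ((G * A) s j).totalDegree ≤ M := by
      intro s j
      have : (G * A) s j = ((A.submatrix a b).updateCol s fun t => A (a t) j).det := by
        rw [hG, ← cramer_apply, cramer_eq_adjugate_mulVec]
        rfl
      rw [this]
      refine (totalDegree_det_le_s10 _ fun i l => ?_).trans hrM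
      rw [updateCol_apply]
      split_ifs
      · exact hA _ _
      · exact hA _ _
    have hGφ : G.map φ * A.map φ = (G * A).map φ := (Matrix.map_mul (f := φ)).symm
    have hAφ : ∀ i j, (A.map φ i j).totalDegree ≤ d := fun i j => (hφ _).trans (hA i j)
    refine SyzygiesGeneratedInDegree.of_map φ hφ' ?_
    refine step_of_unit (A.map φ) hAφ (φ (A.submatrix a b).det) hunit
      ((hφ _).trans ((totalDegree_det_le_s10 _ fun _ _ => hA _ _).trans hrM)) b (G.map φ) ?_ ?_ ?_
      (ih _ (totalDegree_coeffMatrix hAφ) _ ?_)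
    · intro s j
      rw [hGφ]
      exact (hφ _).trans (hGdeg s j)
    · rw [hGφ]
      have := congrArg (fun N => Matrix.map N φ) hminor
      rw [← hG, Matrix.map_mul] at this
      rw [← Matrix.submatrix_map] at this
      rw [← this]
      ext i j
      simp
    · rw [hGφ]
      have h2 : (G * A).submatrix id b = (A.submatrix a b).det • 1 := by
        rw [hG, ← adjugate_mul]
        rfl
      rw [Matrix.submatrix_map, h2]
      ext1 i j
      simp only [Matrix.map_apply, Matrix.smul_apply, Matrix.one_apply, smul_eq_mul, map_mul]
      split_ifs <;> simp
    · rw [Fintype.card_prod, Fintype.card_fin, mul_right_comm]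
      exact Nat.mul_le_mul_right _ hM

/-! ### Descent of the base field -/

/-- Application of a `k`-linear functional on `K` to all coefficients of a polynomial over `K`. -/
noncomputable def coeffwise {σ k K : Type*} [Field k] [Field K] [Algebra k K]
    (l : K →ₗ[k] k) (p : MvPolynomial σ K) : MvPolynomial σ k :=
  ∑ m ∈ p.support, monomial m (l (coeff m p))

section coeffwise

variable {σ k K : Type*} [Field k] [Field K] [Algebra k K] (l : K →ₗ[k] k)

theorem coeff_coeffwise (p : MvPolynomial σ K) (m : σ →₀ ℕ) :
    coeff m (coeffwise l p) = l (coeff m p) := by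
  classical
  simp only [coeffwise, coeff_sum, coeff_monomial, Finset.sum_ite_eq', mem_support_iff]
  split_ifs with h
  · rfl
  · rw [not_not.mp h, map_zero]

theorem coeffwise_add (p q : MvPolynomial σ K) :
    coeffwise l (p + q) = coeffwise l p + coeffwise l q := by
  ext m
  simp [coeff_coeffwise]

theorem coeffwise_zero : coeffwise l (0 : MvPolynomial σ K) = 0 := by
  ext m
  simp [coeff_coeffwise]

theorem coeffwise_sum {ι : Type*} (s : Finset ι) (p : ι → MvPolynomial σ K) :
    coeffwise l (∑ i ∈ s, p i) = ∑ i ∈ s, coeffwise l (p i) := by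
  ext m
  simp [coeff_coeffwise, coeff_sum]

/-- Applying a functional coefficientwise is linear over the polynomials with coefficients in `k`. -/
theorem coeffwise_map_mul (p : MvPolynomial σ k) (q : MvPolynomial σ K) :
    coeffwise l (map (algebraMap k K) p * q) = p * coeffwise l q := by
  classical
  ext m
  simp only [coeff_coeffwise, coeff_mul, coeff_map, map_sum, ← Algebra.smul_def, map_smul,
    smul_eq_mul]

theorem coeffwise_C_mul (a : K) (q : MvPolynomial σ K) :
    coeffwise l (C a * q) = coeffwise (l ∘ₗ LinearMap.mulLeft k a) q := by
  ext m
  simp [coeff_coeffwise, coeff_C_mul]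

theorem totalDegree_coeffwise_le (p : MvPolynomial σ K) :
    (coeffwise l p).totalDegree ≤ p.totalDegree := by
  refine totalDegree_finsetSum_le fun m hm => ?_
  exact (totalDegree_monomial_le _ _).trans (le_totalDegree hm)

end coeffwise

/-- Descent along a field extension `K / k`: coefficientwise application of `k`-linear functionals
`K → k` sends syzygies over `K` to syzygies over `k` without raising degrees, and a functional that
retracts `k → K` recovers the given syzygy. -/
theorem SyzygiesGeneratedInDegree.of_baseChange {σ k K ι κ : Type*} [Field k] [Field K]
    [Algebra k K] [Fintype κ] {A : Matrix ι κ (MvPolynomial σ k)} {D : ℕ}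
    (h : SyzygiesGeneratedInDegree (A.map (map (algebraMap k K))) D) :
    SyzygiesGeneratedInDegree A D := by
  set A' := A.map (map (algebraMap k K)) with hA'
  set T := Submodule.span (MvPolynomial σ k) {w | A *ᵥ w = 0 ∧ ∀ j, (w j).totalDegree ≤ D}
  have hspan : ∀ w ∈ Submodule.span (MvPolynomial σ K)
      {w | A' *ᵥ w = 0 ∧ ∀ j, (w j).totalDegree ≤ D},
      ∀ l : K →ₗ[k] k, (fun j => coeffwise l (w j)) ∈ T := by
    intro w hw
    induction hw using Submodule.span_induction with
    | mem w hw =>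
      intro l
      refine Submodule.subset_span ⟨?_, fun j => (totalDegree_coeffwise_le l _).trans (hw.2 j)⟩
      ext1 i
      have := congrArg (coeffwise l) (congrFun hw.1 i)
      simpa only [mulVec, dotProduct, hA', map_apply, coeffwise_sum, coeffwise_map_mul,
        Pi.zero_apply, coeffwise_zero] using this
    | zero =>
      intro l
      convert Submodule.zero_mem T using 1
      ext1 j
      exact coeffwise_zero l
    | add x y _ _ hx hy =>
      intro l
      convert Submodule.add_mem T (hx l) (hy l) using 1
      ext1 j
      exact coeffwise_add l _ _
    | smul c x _ hx =>
      intro l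
      induction c using MvPolynomial.induction_on' with
      | monomial m a =>
        convert Submodule.smul_mem T (monomial m 1) (hx (l ∘ₗ LinearMap.mulLeft k a)) using 1
        ext1 j
        have : (monomial m a : MvPolynomial σ K) =
            map (algebraMap k K) (monomial m 1) * C a := by
          rw [map_monomial, map_one, mul_comm, C_mul_monomial, mul_one]
        rw [Pi.smul_apply, smul_eq_mul, this, mul_assoc, coeffwise_map_mul, coeffwise_C_mul]
        rfl
      | add p q hp hq =>
        convert Submodule.add_mem T hp hq using 1
        ext1 j
        simp only [Pi.smul_apply, smul_eq_mul, add_mul, coeffwise_add, Pi.add_apply]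
  intro v hv
  obtain ⟨l, hl⟩ := LinearMap.exists_leftInverse_of_injective (Algebra.linearMap k K)
    (LinearMap.ker_eq_bot.mpr (algebraMap k K).injective)
  have hmem := hspan (fun j => map (algebraMap k K) (v j)) (h _ ?_) l
  · convert hmem using 1
    ext j m
    rw [coeff_coeffwise, coeff_map]
    exact (LinearMap.congr_fun hl (coeff m (v j))).symm
  · ext1 i
    have := congrArg (map (algebraMap k K)) (congrFun hv i)
    simpa only [mulVec, dotProduct, hA', map_apply, map_sum, map_mul, Pi.zero_apply, map_zero]
      using this

/-- The quotient ideal `I : (f)` of a nonzero ideal generated in degree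
at most `d` by a nonzero polynomial of degree at most `d` is generated by polynomials of
total degree at most `2·(d+1)^(2^(n+1))`. -/
theorem quotient_ideal_bounded_generators
    (k : Type*) [Field k] (n d : ℕ) (hn : 1 ≤ n) (hd : 1 ≤ d)
    (I : Ideal (MvPolynomial (Fin n) k)) (hI : I ≠ ⊥)
    (S : Set (MvPolynomial (Fin n) k)) (hgen : I = Ideal.span S)
    (hdeg : ∀ g ∈ S, g.totalDegree ≤ d)
    (f : MvPolynomial (Fin n) k) (hf : f ≠ 0) (hfd : f.totalDegree ≤ d) :
    ∃ T : Set (MvPolynomial (Fin n) k),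
      (∀ g ∈ T, g.totalDegree ≤ 2 * (d + 1) ^ 2 ^ (n + 1)) ∧
      ∀ g : MvPolynomial (Fin n) k, g ∈ Ideal.span T ↔ f * g ∈ I := by
  classical
  obtain ⟨F, hFS, hF⟩ : ∃ F : Finset (MvPolynomial (Fin n) k), (F : Set _) ⊆ S ∧
      I = Ideal.span (F : Set (MvPolynomial (Fin n) k)) := by
    have hfg : (Submodule.span (MvPolynomial (Fin n) k) S).FG := IsNoetherian.noetherian _
    obtain ⟨F, hFS, hF⟩ := (Submodule.fg_span_iff_fg_span_finset_subset S).mp hfg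
    exact ⟨F, hFS, hgen.trans hF⟩
  let A : Matrix Unit (Option F) (MvPolynomial (Fin n) k) :=
    of fun _ j => j.elim f Subtype.val
  have hA : ∀ i j, (A i j).totalDegree ≤ d := by
    rintro i (_ | s)
    · exact hfd
    · exact hdeg _ (hFS s.2)
  have hmulVec : ∀ w, A *ᵥ w = 0 ↔
      f * w none + ∑ s : F, (s : MvPolynomial (Fin n) k) * w (some s) = 0 := by
    intro w
    rw [funext_iff]
    simp [mulVec, dotProduct, A, Fintype.sum_option]
  have hsyz : SyzygiesGeneratedInDegree A (syzygyBound d n d) := by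
    refine SyzygiesGeneratedInDegree.of_baseChange (K := AlgebraicClosure k) ?_
    refine syzygiesGeneratedInDegree_of_infinite n _ (fun i j => ?_) d (by simp)
    exact (Finset.sup_mono (support_map_subset _ _)).trans (hA i j)
  have hbound : syzygyBound d n d ≤ 2 * (d + 1) ^ 2 ^ (n + 1) := by
    have h1 := syzygyBound_add_le hd n d le_rfl
    have h2 : 2 * d ≤ (d + 1) ^ 2 := by nlinarith
    have h3 := Nat.pow_le_pow_left h2 (2 ^ n)
    rw [← pow_mul, ← pow_succ'] at h3
    omega
  refine ⟨{g | ∃ w, (A *ᵥ w = 0 ∧ ∀ j, (w j).totalDegree ≤ syzygyBound d n d) ∧ w none = g},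
    ?_, fun g => ⟨fun hg => ?_, fun hg => ?_⟩⟩
  · rintro g ⟨w, hw, rfl⟩
    exact (hw.2 none).trans hbound
  · induction hg using Submodule.span_induction with
    | mem g hg =>
      obtain ⟨w, hw, rfl⟩ := hg
      rw [eq_neg_of_add_eq_zero_left ((hmulVec w).mp hw.1)]
      refine I.neg_mem (I.sum_mem fun s _ => I.mul_mem_right _ ?_)
      rw [hF]
      exact Ideal.subset_span s.2
    | zero => simp
    | add x y _ _ hx hy => rw [mul_add]; exact I.add_mem hx hy
    | smul c x _ hx => rw [smul_eq_mul, mul_left_comm]; exact I.mul_mem_left _ hx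
  · rw [hF] at hg
    obtain ⟨c, -, hc⟩ := Submodule.mem_span_finset.mp hg
    let v : Option F → MvPolynomial (Fin n) k := fun j => j.elim g fun s => -c s
    have hv : A *ᵥ v = 0 := by
      rw [hmulVec]
      have : ∑ s : F, (s : MvPolynomial (Fin n) k) * v (some s) = -(f * g) := by
        rw [← hc, ← Finset.sum_coe_sort F, ← Finset.sum_neg_distrib]
        refine Finset.sum_congr rfl fun s _ => ?_
        simp [v, mul_comm]
      rw [this]
      exact add_neg_cancel _
    have := Submodule.mem_map_of_mem (f := LinearMap.proj (R := MvPolynomial (Fin n) k)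
      (φ := fun _ : Option F => MvPolynomial (Fin n) k) none) (hsyz v hv)
    rw [Submodule.map_span] at this
    exact this
end
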